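/- Let α ≥ α₀ (the constant from the existence result) and let u^{ε,R} ∈ C^∞(Ω̄_R^ε) be the k-convex solution of S_k(D²u) = 1 in Ω_R^ε, u = 0 on ∂B_ε(x₀), u = ū on ∂E_R(0). Then ū(x) ≤ u^{ε,R}(x) ≤ ½xᵀAx + μ(α) for all x ∈ Ω_R^ε, where μ(α) = ∫_{R₀}^{∞} ((1 + α t^{−k/(2h_k(a))})^{1/k} − 1) dt − R₀. -/

import Mathlib

open scoped Classical Topology
open Real Filter MeasureTheory

noncomputable section

/-- Euclidean space ℝⁿ. -/
abbrev Euc (n : ℕ) : Type := EuclideanSpace ℝ (Fin n)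

/-- The standard basis vector `e i`. -/
def ebasis (n : ℕ) (i : Fin n) : Euc n := EuclideanSpace.single i 1

/-- The Hessian matrix `D²u(x)`. -/
def hessMat (n : ℕ) (u : Euc n → ℝ) (x : Euc n) : Matrix (Fin n) (Fin n) ℝ :=
  Matrix.of fun i j => iteratedFDeriv ℝ 2 u x ![ebasis n i, ebasis n j]

/-- The Laplacian `Δu(x)` (trace of the Hessian). -/
def lapl (n : ℕ) (u : Euc n → ℝ) (x : Euc n) : ℝ := ∑ i, hessMat n u x i i

/-- The `k`-th elementary symmetric function of the eigenvalues of an `n × n` matrix,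
expressed through the coefficients of the characteristic polynomial. -/
def matSk (n k : ℕ) (M : Matrix (Fin n) (Fin n) ℝ) : ℝ :=
  (-1 : ℝ) ^ k * (Matrix.charpoly M).coeff (n - k)

/-- `S_k(D²u)(x)`. -/
def SkHess (n k : ℕ) (u : Euc n → ℝ) (x : Euc n) : ℝ := matSk n k (hessMat n u x)

/-- `u` is `k`-convex on `U`: the eigenvalues of the Hessian lie in the Gårding cone `Γ_k`. -/
def KConvexOn (n k : ℕ) (u : Euc n → ℝ) (U : Set (Euc n)) : Prop :=
  ∀ x ∈ U, ∀ j : ℕ, 1 ≤ j → j ≤ k → 0 < matSk n j (hessMat n u x)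

/-- Membership in the class `𝒜_k`: symmetric positive definite with `S_k(λ(A)) = 1`. -/
def MemA (n k : ℕ) (A : Matrix (Fin n) (Fin n) ℝ) : Prop :=
  A.IsSymm ∧ A.PosDef ∧ matSk n k A = 1

/-- The quadratic form `½ xᵀ A x`. -/
def quadA (n : ℕ) (A : Matrix (Fin n) (Fin n) ℝ) (x : Euc n) : ℝ :=
  (1 / 2) * ∑ i, ∑ j, x i * A i j * x j

/-- The linear form `b ⋅ x`. -/
def linB (n : ℕ) (b x : Euc n) : ℝ := ∑ i, b i * x i

/-- `λ_max(A) < c`, expressed through the quadratic form (for symmetric `A`). -/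
def lambdaMaxLT (n : ℕ) (A : Matrix (Fin n) (Fin n) ℝ) (c : ℝ) : Prop :=
  ∀ x : Euc n, x ≠ 0 → ∑ i, ∑ j, x i * A i j * x j < c * ‖x‖ ^ 2

/-- `u` is smooth on an open neighbourhood of the (closed) set `S`;
this is our rendering of `u ∈ C^∞(S)` for a closed set `S`. -/
def SmoothOnNhd (n : ℕ) (u : Euc n → ℝ) (S : Set (Euc n)) : Prop :=
  ∃ U : Set (Euc n), IsOpen U ∧ S ⊆ U ∧ ContDiffOn ℝ (⊤ : ℕ∞) u U

/-- A smooth bounded strictly convex domain in ℝⁿ. -/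
def SmoothStrictConvexDomain (n : ℕ) (Ω : Set (Euc n)) : Prop :=
  IsOpen Ω ∧ Bornology.IsBounded Ω ∧ Ω.Nonempty ∧ Convex ℝ Ω ∧ StrictConvex ℝ Ω ∧
    ∃ f : Euc n → ℝ, ContDiff ℝ (⊤ : ℕ∞) f ∧ Ω = {x | f x < 0} ∧
      ∀ x ∈ frontier Ω, fderiv ℝ f x ≠ 0

/-- Extension of `u` by the constant value `v` inside `Ω`. -/
def extBy (n : ℕ) (Ω : Set (Euc n)) (v : ℝ) (u : Euc n → ℝ) : Euc n → ℝ :=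
  fun x => if x ∈ Ω then v else u x

/-- `u` (vanishing on `∂Ω`) is quasiconvex: all sublevel sets of its zero-extension are convex. -/
def QuasiconvexSol (n : ℕ) (Ω : Set (Euc n)) (u : Euc n → ℝ) : Prop :=
  ∀ t : ℝ, Convex ℝ {x : Euc n | extBy n Ω 0 u x ≤ t}

/-- The `k`-th elementary symmetric polynomial of a vector `a ∈ ℝⁿ`. -/
def esymmVec (n k : ℕ) (a : Fin n → ℝ) : ℝ :=
  ∑ s ∈ Finset.powersetCard k (Finset.univ : Finset (Fin n)), ∏ i ∈ s, a i

/-- `h_k(a) = max_i S_{k-1}(a)|_{a_i = 0} · a_i`. -/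
def hkfun (n k : ℕ) (a : Fin n → ℝ) : ℝ :=
  ⨆ i : Fin n, esymmVec n (k - 1) (Function.update a i 0) * a i

/-- The exponent `-k / (2 h_k(a))`. -/
def genExp (n k : ℕ) (a : Fin n → ℝ) : ℝ := -(k : ℝ) / (2 * hkfun n k a)

/-- The integrand `(1 + α t^{-k/(2h_k(a))})^{1/k}`. -/
def genInt (n k : ℕ) (a : Fin n → ℝ) (α t : ℝ) : ℝ :=
  (1 + α * t ^ genExp n k a) ^ ((1 : ℝ) / (k : ℝ))

/-- The generalized symmetric function `ū`. -/
def ubar (n k : ℕ) (a : Fin n → ℝ) (R₀ α : ℝ) (x : Euc n) : ℝ :=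
  ∫ t in R₀..(quadA n (Matrix.diagonal a) x), genInt n k a α t

/-- `μ(α) = ∫_{R₀}^∞ ((1 + α t^{-k/(2h_k(a))})^{1/k} - 1) dt - R₀`. -/
def muA (n k : ℕ) (a : Fin n → ℝ) (R₀ α : ℝ) : ℝ :=
  (∫ t in Set.Ioi R₀, (genInt n k a α t - 1)) - R₀

/-- The ellipsoid `E_R(xb) = {x : ½ (x - xb)ᵀ A (x - xb) < R}`. -/
def ESet (n : ℕ) (A : Matrix (Fin n) (Fin n) ℝ) (xb : Euc n) (R : ℝ) : Set (Euc n) :=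
  {x : Euc n | quadA n A (x - xb) < R}

/-- The non-concentric convex ring `Ω_R^ε = E_R(0) ∖ B̄_ε(x₀)`. -/
def OmegaRe (n : ℕ) (a : Fin n → ℝ) (x₀ : Euc n) (ε R : ℝ) : Set (Euc n) :=
  ESet n (Matrix.diagonal a) 0 R \ closure (Metric.ball x₀ ε)

/-- `u` is a `k`-convex solution of the approximating problem
`S_k(D²u) = 1` in `Ω_R^ε`, `u = 0` on `∂B_ε(x₀)`, `u = ū` on `∂E_R(0)`. -/
def ApproxSol (n k : ℕ) (a : Fin n → ℝ) (x₀ : Euc n) (ε R R₀ α : ℝ)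
    (u : Euc n → ℝ) : Prop :=
  SmoothOnNhd n u (closure (OmegaRe n a x₀ ε R)) ∧
  KConvexOn n k u (OmegaRe n a x₀ ε R) ∧
  (∀ x ∈ OmegaRe n a x₀ ε R, SkHess n k u x = 1) ∧
  (∀ x ∈ Metric.sphere x₀ ε, u x = 0) ∧
  (∀ x : Euc n, quadA n (Matrix.diagonal a) x = R → u x = ubar n k a R₀ α x)

/-- The constant `C_ε` of the boundary gradient estimate. -/
def Ceps (n k : ℕ) (C ε : ℝ) : ℝ :=
  if 2 * k < n then C * ((n : ℝ) / (k : ℝ) - 2) * ε⁻¹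
  else if 2 * k = n then C * ε⁻¹ * |Real.log ε|⁻¹
  else C * (2 - (n : ℝ) / (k : ℝ)) * ε ^ (1 - (n : ℝ) / (k : ℝ))

/-- `u` is a `k`-convex solution of the exterior Dirichlet problem
`S_k(D²u) = 1` in `ℝⁿ ∖ B̄_ε(x₀)`, `u = 0` on `∂B_ε(x₀)`, with quadratic asymptotics
`½ xᵀAx + c` at infinity (`A = diag a`). -/
def ExtBallSol (n k : ℕ) (a : Fin n → ℝ) (x₀ : Euc n) (ε c : ℝ) (u : Euc n → ℝ) : Prop :=
  SmoothOnNhd n u (Metric.ball x₀ ε)ᶜ ∧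
  KConvexOn n k u (closure (Metric.ball x₀ ε))ᶜ ∧
  (∀ x ∈ (closure (Metric.ball x₀ ε))ᶜ, SkHess n k u x = 1) ∧
  (∀ x ∈ Metric.sphere x₀ ε, u x = 0) ∧
  Tendsto (fun x : Euc n => u x - (quadA n (Matrix.diagonal a) x + c))
    (cocompact (Euc n)) (𝓝 0)

/-- `u` is a `k`-convex solution of the exterior Dirichlet problem on `ℝⁿ ∖ Ω₀` with
asymptotics `½ xᵀAx + b·x + c` at infinity. -/
def ExtDomSol (n k : ℕ) (Ω₀ : Set (Euc n)) (A : Matrix (Fin n) (Fin n) ℝ) (b : Euc n)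
    (c : ℝ) (u : Euc n → ℝ) : Prop :=
  SmoothOnNhd n u Ω₀ᶜ ∧
  KConvexOn n k u (closure Ω₀)ᶜ ∧
  (∀ x ∈ (closure Ω₀)ᶜ, SkHess n k u x = 1) ∧
  (∀ x ∈ frontier Ω₀, u x = 0) ∧
  Tendsto (fun x : Euc n => u x - (quadA n A x + linB n b x + c))
    (cocompact (Euc n)) (𝓝 0)

/-- `u` is a solution of the exterior Dirichlet problem for the Laplace equation
`Δu = 1` on `ℝⁿ ∖ Ω₀` with asymptotics `½ xᵀAx + b·x + c` at infinity. -/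
def ExtDomSolLap (n : ℕ) (Ω₀ : Set (Euc n)) (A : Matrix (Fin n) (Fin n) ℝ) (b : Euc n)
    (c : ℝ) (u : Euc n → ℝ) : Prop :=
  SmoothOnNhd n u Ω₀ᶜ ∧
  (∀ x ∈ (closure Ω₀)ᶜ, lapl n u x = 1) ∧
  (∀ x ∈ frontier Ω₀, u x = 0) ∧
  Tendsto (fun x : Euc n => u x - (quadA n A x + linB n b x + c))
    (cocompact (Euc n)) (𝓝 0)

/-- `u` solves the exterior problem `Δu = 0` in `ℝⁿ ∖ Ω̄`, `u = 1` on `∂Ω`,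
`u → 0` at infinity. -/
def HarmExtSol (n : ℕ) (Ω : Set (Euc n)) (u : Euc n → ℝ) : Prop :=
  SmoothOnNhd n u Ωᶜ ∧
  (∀ x ∈ (closure Ω)ᶜ, lapl n u x = 0) ∧
  (∀ x ∈ frontier Ω, u x = 1) ∧
  Tendsto u (cocompact (Euc n)) (𝓝 0)

end

/-!
Both bounds are comparison arguments by touching: at a local minimum of `u - φ` the matrix
`D²u - D²φ` is positive semidefinite, and `S_k` is monotone along positive semidefinite directions
starting from `Γ_k`, so `φ` cannot be a strict subsolution there.

*Lower bound.* Newton's inequalities for the real-rooted polynomial `∏ (1 + a_i X)` make the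
quotients `S_{j-1}(a)|_{a_i = 0} a_i / S_j(a)` nondecreasing in `j`, so for `j ≤ k` they are at most
`h_k(a)`, because `S_k(a) = 1`. Since `ū = W(½xᵀAx)` with `W` increasing and concave, this bounds
the contribution of `W''` to `S_j(D²ū)`, and `W` solves the ordinary differential equation for which
the resulting lower bound of `S_k(D²ū)` is exactly `1`; scaling by `1 + δ` makes the inequality
strict. This barrier does not control `u` on `∂B_ε(x₀)`, where `½xᵀAx` may be small, so near the
removed ball it is replaced by `‖x - x₀‖² - ε²`. The two are glued: for large `α` the outer barrier
is the larger one on `½xᵀAx = 2R₀` and it is negative, hence the smaller one, on `½xᵀAx = R₀`, so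
the minimum of `u - φ` over both pieces is never attained at an interface. Then let `δ → 0`.

*Upper bound.* `(1 - δ) · ½xᵀAx + μ + δR` is a strict supersolution, and it dominates the boundary
values because `W(s) ≤ s + μ(α)` for `s ≥ R₀`.
-/

section RealRootedPolynomials

open Polynomial

lemma splits_derivative {p : ℝ[X]} (hp : p.Splits) : (derivative p).Splits := by
  by_cases h0 : p.natDegree = 0
  · rw [eq_C_of_natDegree_eq_zero h0]
    simp
  · rw [splits_iff_card_roots] at hp ⊢
    have hrolle := card_roots_le_derivative p
    have hcard := (derivative p).card_roots'
    have hdeg := natDegree_derivative_lt h0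
    omega

lemma splits_iterate_derivative {p : ℝ[X]} (hp : p.Splits) (m : ℕ) :
    (derivative^[m] p).Splits := by
  induction m with
  | zero => exact hp
  | succ m ih => rw [Function.iterate_succ_apply']; exact splits_derivative ih

/-- Laguerre's inequality. -/
lemma eval_mul_eval_derivative_derivative_le {p : ℝ[X]} (hp : p.Splits) (x : ℝ) :
    p.eval x * (derivative (derivative p)).eval x ≤ (derivative p).eval x ^ 2 := by
  obtain ⟨s, hs⟩ := splits_iff_exists_multiset'.1 hp
  generalize p.leadingCoeff = c at hs
  subst hs
  clear hp
  induction s using Multiset.induction_on with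
  | empty => simp
  | cons r s ih =>
    simp only [Multiset.map_cons, Multiset.prod_cons, mul_left_comm (C c)]
    set q := C c * (s.map fun a => X + C a).prod
    simp only [derivative_mul, derivative_add, derivative_X, derivative_C, eval_mul, eval_add,
      eval_X, eval_C, add_zero, one_mul]
    nlinarith [mul_le_mul_of_nonneg_left ih (sq_nonneg (x + r)), sq_nonneg (q.eval x)]

/-- Newton's inequality, without its sharp binomial constant. -/
lemma coeff_mul_coeff_add_two_le {p : ℝ[X]} (hp : p.Splits) (m : ℕ) :
    p.coeff m * p.coeff (m + 2) ≤ p.coeff (m + 1) ^ 2 := by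
  have hlag := eval_mul_eval_derivative_derivative_le (splits_iterate_derivative hp m) 0
  have heval (l : ℕ) : (derivative^[l] p).eval 0 = l.factorial * p.coeff l := by
    rw [← coeff_zero_eq_eval_zero, coeff_iterate_derivative, zero_add, Nat.descFactorial_self,
      nsmul_eq_mul]
  rw [← Function.iterate_succ_apply' (⇑derivative), ← Function.iterate_succ_apply' (⇑derivative),
    heval, heval, heval, Nat.factorial_succ (m + 1), Nat.factorial_succ m] at hlag
  push_cast at hlag
  have hfac : (0 : ℝ) < (m + 1) * m.factorial ^ 2 := by positivity
  have hsharp : (m + 2) * (p.coeff m * p.coeff (m + 2)) ≤ (m + 1) * p.coeff (m + 1) ^ 2 :=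
    le_of_mul_le_mul_left (by linarith) hfac
  nlinarith [sq_nonneg (p.coeff (m + 1)), m.cast_nonneg (α := ℝ)]

end RealRootedPolynomials

section ElementarySymmetricFunctions

open Polynomial

variable {n k l m : ℕ} {a d : Fin n → ℝ}

lemma esymmVec_eq_coeff_prod (m : ℕ) (d : Fin n → ℝ) :
    esymmVec n m d = (∏ i, (1 + C (d i) * X)).coeff m := by
  rw [Finset.prod_one_add, finsetSum_coeff, esymmVec, Finset.powersetCard_eq_filter,
    Finset.sum_filter]
  refine Finset.sum_congr rfl fun s _ => ?_
  rw [Finset.prod_mul_distrib, Finset.prod_const, ← map_prod, coeff_C_mul, coeff_X_pow]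
  simp [eq_comm]

lemma esymmVec_zero (d : Fin n → ℝ) : esymmVec n 0 d = 1 := by
  simp [esymmVec]

lemma esymmVec_smul (c : ℝ) (d : Fin n → ℝ) (m : ℕ) :
    esymmVec n m (c • d) = c ^ m * esymmVec n m d := by
  rw [esymmVec, esymmVec, Finset.mul_sum]
  refine Finset.sum_congr rfl fun s hs => ?_
  simp only [Pi.smul_apply, smul_eq_mul, Finset.prod_mul_distrib, Finset.prod_const,
    (Finset.mem_powersetCard.1 hs).2]

lemma esymmVec_nonneg (hd : ∀ i, 0 ≤ d i) (m : ℕ) : 0 ≤ esymmVec n m d :=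
  Finset.sum_nonneg fun _ _ => Finset.prod_nonneg fun i _ => hd i

lemma esymmVec_pos (hd : ∀ i, 0 < d i) (hm : m ≤ n) : 0 < esymmVec n m d :=
  Finset.sum_pos (fun _ _ => Finset.prod_pos fun i _ => hd i)
    (Finset.powersetCard_nonempty.2 (by simpa using hm))

lemma prod_eq_mul_prod_update {R : Type*} [CommMonoid R] (f : ℝ → R) (hf : f 0 = 1)
    (d : Fin n → ℝ) (i : Fin n) :
    ∏ l, f (d l) = f (d i) * ∏ l, f (Function.update d i 0 l) := by
  have hupdate : ∏ l, f (Function.update d i 0 l) = ∏ l ∈ Finset.univ.erase i, f (d l) := by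
    rw [← Finset.mul_prod_erase _ _ (Finset.mem_univ i), Function.update_self, hf, one_mul]
    refine Finset.prod_congr rfl fun l hl => ?_
    rw [Function.update_of_ne (Finset.ne_of_mem_erase hl)]
  rw [hupdate, Finset.mul_prod_erase _ (fun l => f (d l)) (Finset.mem_univ i)]

lemma esymmVec_succ_eq_update (d : Fin n → ℝ) (i : Fin n) (m : ℕ) :
    esymmVec n (m + 1) d = esymmVec n (m + 1) (Function.update d i 0) +
      d i * esymmVec n m (Function.update d i 0) := by
  simp only [esymmVec_eq_coeff_prod]
  rw [prod_eq_mul_prod_update (fun t => 1 + C t * X) (by simp) d i, add_mul, one_mul, coeff_add,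
    mul_assoc, coeff_C_mul, coeff_X_mul]

lemma esymmVec_mul_esymmVec_add_two_le (d : Fin n → ℝ) (m : ℕ) :
    esymmVec n m d * esymmVec n (m + 2) d ≤ esymmVec n (m + 1) d ^ 2 := by
  simp only [esymmVec_eq_coeff_prod]
  refine coeff_mul_coeff_add_two_le (Splits.prod fun i _ => ?_) m
  exact Splits.of_natDegree_le_one (by compute_degree)

lemma esymmVec_update_pos (hd : ∀ j ≤ k, 0 < esymmVec n j d) (i : Fin n) (hm : m < k) :
    0 < esymmVec n m (Function.update d i 0) := by
  induction m with
  | zero => simp only [esymmVec_zero, zero_lt_one]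
  | succ m ih =>
    have hpos := ih (by omega)
    have hpos₁ := hd (m + 1) (by omega)
    have hpos₂ := hd (m + 2) hm
    have hnewton := esymmVec_mul_esymmVec_add_two_le (Function.update d i 0) m
    rw [esymmVec_succ_eq_update d i] at hpos₁ hpos₂
    by_contra! hneg
    nlinarith [mul_pos hpos hpos₂, mul_nonneg (neg_nonneg.2 hneg) hpos₁.le]

lemma mul_succ_le_succ_mul_of_logConcave {f : ℕ → ℝ} (hlog : ∀ j, f j * f (j + 2) ≤ f (j + 1) ^ 2)
    (hml : m ≤ l) (hf : ∀ j ≤ l, 0 < f j) : f m * f (l + 1) ≤ f (m + 1) * f l := by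
  induction l, hml using Nat.le_induction with
  | base => exact (mul_comm _ _).le
  | succ l hml ih =>
    have ih := ih fun j hj => hf j (by omega)
    have hl := hf l (by omega)
    have hl₁ := hf (l + 1) le_rfl
    refine le_of_mul_le_mul_right ?_ hl
    nlinarith [mul_le_mul_of_nonneg_left (hlog l) (hf m (by omega)).le,
      mul_le_mul_of_nonneg_right ih hl₁.le]

lemma esymmVec_update_mul_le (ha : ∀ j ≤ l + 1, 0 < esymmVec n j a) (i : Fin n) (hml : m ≤ l) :
    esymmVec n m (Function.update a i 0) * esymmVec n (l + 1) a ≤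
      esymmVec n l (Function.update a i 0) * esymmVec n (m + 1) a := by
  have hlog := mul_succ_le_succ_mul_of_logConcave
    (esymmVec_mul_esymmVec_add_two_le (Function.update a i 0)) hml
    fun j hj => esymmVec_update_pos ha i (by omega)
  rw [esymmVec_succ_eq_update a i l, esymmVec_succ_eq_update a i m]
  linarith

lemma esymmVec_update_mul_le_hkfun (k : ℕ) (a : Fin n → ℝ) (i : Fin n) :
    esymmVec n (k - 1) (Function.update a i 0) * a i ≤ hkfun n k a :=
  le_ciSup (f := fun i => esymmVec n (k - 1) (Function.update a i 0) * a i)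
    (Set.finite_range _).bddAbove i

lemma hkfun_pos (hk : 1 ≤ k) (hkn : k ≤ n) (ha : ∀ i, 0 < a i) : 0 < hkfun n k a := by
  have i : Fin n := ⟨0, by omega⟩
  refine lt_of_lt_of_le (mul_pos ?_ (ha i)) (esymmVec_update_mul_le_hkfun k a i)
  exact esymmVec_update_pos (fun j hj => esymmVec_pos ha (hj.trans hkn)) i (by omega)

lemma mul_esymmVec_update_le_hkfun_mul (hkn : k ≤ n) (ha : ∀ i, 0 < a i)
    (hSk : esymmVec n k a = 1) (i : Fin n) (hm : m < k) :
    a i * esymmVec n m (Function.update a i 0) ≤ hkfun n k a * esymmVec n (m + 1) a := by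
  have hpos : ∀ j ≤ k - 1 + 1, 0 < esymmVec n j a := fun j hj => esymmVec_pos ha (by omega)
  have hratio := esymmVec_update_mul_le hpos i (Nat.le_sub_one_of_lt hm)
  rw [Nat.sub_add_cancel (by omega), hSk, mul_one] at hratio
  calc a i * esymmVec n m (Function.update a i 0)
      ≤ a i * (esymmVec n (k - 1) (Function.update a i 0) * esymmVec n (m + 1) a) :=
        mul_le_mul_of_nonneg_left hratio (ha i).le
    _ = esymmVec n (k - 1) (Function.update a i 0) * a i * esymmVec n (m + 1) a := by ring
    _ ≤ hkfun n k a * esymmVec n (m + 1) a :=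
        mul_le_mul_of_nonneg_right (esymmVec_update_mul_le_hkfun k a i)
          (hpos (m + 1) (by omega)).le

lemma two_mul_hkfun_lt (hn : 3 ≤ n) (hk : 1 ≤ k) (ha : ∀ i, 0 < a i)
    (hSk : esymmVec n k a = 1) (ha₁ : k = 1 → (⨆ i, a i) < 1 / 2) : 2 * hkfun n k a < k := by
  have : Nonempty (Fin n) := ⟨⟨0, by omega⟩⟩
  obtain ⟨i, hi⟩ := exists_eq_ciSup_of_finite
    (f := fun i => esymmVec n (k - 1) (Function.update a i 0) * a i)
  rw [hkfun, ← hi]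
  obtain rfl | hk2 := hk.eq_or_lt
  · have := (le_ciSup (Set.finite_range a).bddAbove i).trans_lt (ha₁ rfl)
    rw [Nat.sub_self, esymmVec_zero, Nat.cast_one]
    linarith
  have hsplit := esymmVec_succ_eq_update a i (k - 1)
  rw [Nat.sub_add_cancel hk, hSk] at hsplit
  obtain rfl | hk3 := Nat.succ_le_of_lt hk2 |>.eq_or_lt
  · have hrest := esymmVec_update_pos (fun j hj => esymmVec_pos ha hj) i (m := 2) (by omega)
    push_cast
    linarith
  · have hrest : 0 ≤ esymmVec n k (Function.update a i 0) := by
      refine esymmVec_nonneg (fun l => ?_) k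
      obtain rfl | hl := eq_or_ne l i
      · rw [Function.update_self]
      · rw [Function.update_of_ne hl]
        exact (ha l).le
    have : (3 : ℝ) ≤ k := by exact_mod_cast hk3
    linarith

end ElementarySymmetricFunctions

section SymmetricFunctionsOfEigenvalues

open Polynomial Matrix

variable {n k m : ℕ} {B D : Matrix (Fin n) (Fin n) ℝ}

lemma matSk_eq_sum_minors (hm : m ≤ n) (M : Matrix (Fin n) (Fin n) ℝ) :
    matSk n m M = ∑ s ∈ Finset.univ.powersetCard m,
      (M.submatrix (Subtype.val : s → Fin n) (Subtype.val : s → Fin n)).det := by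
  have hcoeff := charpoly_coeff_eq_sum_minors M m (by simpa using hm)
  rw [Fintype.card_fin] at hcoeff
  rw [matSk, hcoeff, ← mul_assoc, ← mul_pow]
  simp

lemma matSk_eq_coeff_det (hm : m ≤ n) (M : Matrix (Fin n) (Fin n) ℝ) :
    matSk n m M = (det (1 + (X : ℝ[X]) • M.map C)).coeff m := by
  rw [matSk_eq_sum_minors hm, coeff_det_one_add_X_smul_eq_sum_minors]

lemma matSk_zero (M : Matrix (Fin n) (Fin n) ℝ) : matSk n 0 M = 1 := by
  simp [matSk_eq_sum_minors (Nat.zero_le n)]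

lemma matSk_diagonal (hm : m ≤ n) (d : Fin n → ℝ) :
    matSk n m (diagonal d) = esymmVec n m d := by
  rw [matSk_eq_sum_minors hm, esymmVec]
  refine Finset.sum_congr rfl fun s _ => ?_
  rw [submatrix_diagonal _ _ Subtype.val_injective, det_diagonal]
  exact Finset.prod_coe_sort s d

lemma matSk_transpose_mul_mul (m : ℕ) {U : Matrix (Fin n) (Fin n) ℝ} (hU : U * Uᵀ = 1)
    (M : Matrix (Fin n) (Fin n) ℝ) : matSk n m (Uᵀ * M * U) = matSk n m M := by
  rw [matSk, matSk, charpoly_mul_comm, ← Matrix.mul_assoc, hU, Matrix.one_mul]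

lemma det_diagonal_add_vecMulVec {ι K : Type*} [Fintype ι] [DecidableEq ι] [Field K] {d : ι → K}
    (hd : ∀ i, d i ≠ 0) (u v : ι → K) :
    (diagonal d + vecMulVec u v).det = (∏ i, d i) * (1 + ∑ i, u i * v i / d i) := by
  have hfactor : diagonal d + vecMulVec u v = diagonal d *
      (1 + replicateCol Unit (fun i => u i / d i) * replicateRow Unit v) := by
    rw [← vecMulVec_eq, Matrix.mul_add, Matrix.mul_one, mul_vecMulVec]
    congr
    ext i
    rw [mulVec_diagonal, mul_div_cancel₀ _ (hd i)]
  rw [hfactor, det_mul, det_diagonal, det_one_add_replicateCol_mul_replicateRow]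
  simp only [dotProduct, div_mul_eq_mul_div, mul_comm (v _)]

lemma det_one_add_X_smul_diagonal_add_vecMulVec (d v : Fin n → ℝ) (c : ℝ) :
    det (1 + (X : ℝ[X]) • (diagonal d + c • vecMulVec v v).map C) =
      ∏ l, (1 + C (d l) * X) +
        ∑ i, C (c * v i ^ 2) * (X * ∏ l, (1 + C (Function.update d i 0 l) * X)) := by
  refine eq_of_infinite_eval_eq _ _ (infinite_of_mem_nhds 0 ?_)
  have hne : ∀ᶠ t in 𝓝 (0 : ℝ), ∀ i, 1 + d i * t ≠ 0 :=
    eventually_all.2 fun i => ContinuousAt.eventually_ne (by fun_prop) (by simp)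
  filter_upwards [hne] with t ht
  have heval : (evalRingHom t).mapMatrix (1 + (X : ℝ[X]) • (diagonal d + c • vecMulVec v v).map C) =
      diagonal (fun i => 1 + d i * t) + vecMulVec ((t * c) • v) v := by
    ext i j
    obtain rfl | hij := eq_or_ne i j
    · simp only [RingHom.mapMatrix_apply, coe_evalRingHom, map_apply, Matrix.add_apply,
        one_apply_eq, Matrix.smul_apply, diagonal_apply_eq, vecMulVec_apply, smul_eq_mul, map_add,
        map_mul, eval_add, eval_one, eval_mul, eval_X, eval_C, smul_vecMulVec]
      ring
    · simp only [RingHom.mapMatrix_apply, coe_evalRingHom, map_apply, Matrix.add_apply, ne_eq,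
        hij, not_false_eq_true, one_apply_ne, Matrix.smul_apply, diagonal_apply_ne, vecMulVec_apply,
        smul_eq_mul, zero_add, map_mul, eval_mul, eval_X, eval_C, smul_vecMulVec]
      ring
  have hprod (i : Fin n) : ∏ l, (1 + d l * t) =
      (1 + d i * t) * ∏ l, (1 + Function.update d i 0 l * t) :=
    prod_eq_mul_prod_update (fun s => 1 + s * t) (by simp) d i
  have hminor (i : Fin n) : (∏ l, (1 + d l * t)) * ((t * c) * v i * v i / (1 + d i * t)) =
      c * v i ^ 2 * (t * ∏ l, (1 + Function.update d i 0 l * t)) := by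
    rw [hprod i]
    field_simp [ht i]
  change evalRingHom t _ = _
  rw [RingHom.map_det, heval, det_diagonal_add_vecMulVec ht, mul_add, mul_one, Finset.mul_sum]
  simp [eval_prod, eval_finsetSum, ← hminor]

lemma matSk_diagonal_add_smul_vecMulVec (hm : m + 1 ≤ n) (d v : Fin n → ℝ) (c : ℝ) :
    matSk n (m + 1) (diagonal d + c • vecMulVec v v) =
      esymmVec n (m + 1) d + c * ∑ i, v i ^ 2 * esymmVec n m (Function.update d i 0) := by
  rw [matSk_eq_coeff_det hm, det_one_add_X_smul_diagonal_add_vecMulVec, coeff_add, finsetSum_coeff,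
    Finset.mul_sum]
  simp only [coeff_C_mul, coeff_X_mul, ← esymmVec_eq_coeff_prod, mul_assoc]

/-- The matrices whose eigenvalues lie in the Gårding cone `Γ_k`. The index `j = 0` is allowed
because `S_0 = 1`. -/
def GardingCone (n k : ℕ) : Set (Matrix (Fin n) (Fin n) ℝ) :=
  {M | ∀ j ≤ k, 0 < matSk n j M}

lemma matSk_le_matSk_add_vecMulVec (hkn : k ≤ n) (hB : B.IsSymm) (hBk : B ∈ GardingCone n k)
    (v : Fin n → ℝ) (hm : m ≤ k) : matSk n m B ≤ matSk n m (B + vecMulVec v v) := by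
  have hH : B.IsHermitian := by rwa [IsHermitian, conjTranspose_eq_transpose_of_trivial]
  set U : Matrix (Fin n) (Fin n) ℝ := hH.eigenvectorUnitary.1
  have hU : U * Uᵀ = 1 := by
    simpa [star_eq_conjTranspose] using (Unitary.mem_iff.1 hH.eigenvectorUnitary.2).2
  have hdiag : Uᵀ * B * U = diagonal hH.eigenvalues := by
    simpa [Unitary.conjStarAlgAut_star_apply, star_eq_conjTranspose] using
      hH.conjStarAlgAut_star_eigenvectorUnitary
  have hadd : Uᵀ * (B + vecMulVec v v) * U =
      diagonal hH.eigenvalues + (1 : ℝ) • vecMulVec (Uᵀ *ᵥ v) (Uᵀ *ᵥ v) := by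
    rw [Matrix.mul_add, Matrix.add_mul, hdiag, mul_vecMulVec, vecMulVec_mul, one_smul,
      mulVec_transpose]
  have hesymm (j : ℕ) (hj : j ≤ k) : matSk n j B = esymmVec n j hH.eigenvalues := by
    rw [← matSk_transpose_mul_mul j hU, hdiag, matSk_diagonal (hj.trans hkn)]
  obtain _ | m := m
  · rw [matSk_zero, matSk_zero]
  rw [← matSk_transpose_mul_mul (m + 1) hU (B + vecMulVec v v), hadd, hesymm _ hm,
    matSk_diagonal_add_smul_vecMulVec (hm.trans hkn), one_mul, le_add_iff_nonneg_right]
  refine Finset.sum_nonneg fun i _ => mul_nonneg (sq_nonneg _) (le_of_lt ?_)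
  exact esymmVec_update_pos (fun j hj => hesymm j hj ▸ hBk j hj) i hm

lemma matSk_le_matSk_of_posSemidef_sub (hkn : k ≤ n) (hB : B.IsSymm) (hBk : B ∈ GardingCone n k)
    (hBD : (D - B).PosSemidef) (hm : m ≤ k) : matSk n m B ≤ matSk n m D := by
  obtain ⟨r, v, hv⟩ := posSemidef_iff_eq_sum_vecMulVec.1 hBD
  have hsum (s : Finset (Fin r)) : (B + ∑ i ∈ s, vecMulVec (v i) (v i)).IsSymm ∧
      ∀ j ≤ k, matSk n j B ≤ matSk n j (B + ∑ i ∈ s, vecMulVec (v i) (v i)) := by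
    induction s using Finset.induction_on with
    | empty => simpa using hB
    | insert i s hi ih =>
      rw [Finset.sum_insert hi, add_comm (vecMulVec _ _), ← add_assoc]
      refine ⟨ih.1.add (by rw [IsSymm, transpose_vecMulVec]), fun j hj => (ih.2 j hj).trans ?_⟩
      exact matSk_le_matSk_add_vecMulVec hkn ih.1
        (fun l hl => (hBk l hl).trans_le (ih.2 l hl)) (v i) hj
  have hD : D = B + ∑ i, vecMulVec (v i) (v i) := by
    simpa [add_comm] using sub_eq_iff_eq_add.1 hv
  rw [hD]
  exact (hsum Finset.univ).2 m hm

end SymmetricFunctionsOfEigenvalues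

section SecondOrderConditions

lemma deriv_deriv_nonneg_of_isLocalMin {f : ℝ → ℝ} {x : ℝ} (hf : ContinuousAt f x)
    (hmin : IsLocalMin f x) : 0 ≤ deriv (deriv f) x := by
  by_contra! hneg
  have hmax := isLocalMax_of_deriv_deriv_neg hneg hmin.deriv_eq_zero hf
  have hconst : f =ᶠ[𝓝 x] fun _ => f x := by
    filter_upwards [hmin, hmax] with t hge hle using le_antisymm hle hge
  have hzero : deriv (deriv f) x = 0 := by
    rw [hconst.deriv.deriv_eq]
    simp
  linarith

lemma fderiv_fderiv_apply_self_nonneg_of_isLocalMin {E : Type*} [NormedAddCommGroup E]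
    [NormedSpace ℝ E] {f : E → ℝ} {x : E} (hf : ContDiffAt ℝ 2 f x) (hmin : IsLocalMin f x)
    (v : E) : 0 ≤ fderiv ℝ (fderiv ℝ f) x v v := by
  have hline (t : ℝ) : HasDerivAt (fun t : ℝ => x + t • v) v t := by
    simpa using ((hasDerivAt_id t).smul_const v).const_add x
  have htendsto : Tendsto (fun t : ℝ => x + t • v) (𝓝 0) (𝓝 x) := by
    simpa using (hline 0).continuousAt.tendsto
  have hderiv : deriv (fun t : ℝ => f (x + t • v)) =ᶠ[𝓝 0] fun t => fderiv ℝ f (x + t • v) v := by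
    filter_upwards [htendsto.eventually (hf.eventually (by simp))] with t ht
    exact ((ht.differentiableAt (by norm_num)).hasFDerivAt.comp_hasDerivAt t (hline t)).deriv
  have hderiv₂ : HasDerivAt (fun t : ℝ => fderiv ℝ f (x + t • v) v)
      (fderiv ℝ (fderiv ℝ f) x v v) 0 := by
    have hdiff : DifferentiableAt ℝ (fderiv ℝ f) x :=
      (hf.fderiv_right (m := 1) (by norm_num)).differentiableAt (by norm_num)
    have hchain : HasDerivAt (fun t : ℝ => fderiv ℝ f (x + t • v)) (fderiv ℝ (fderiv ℝ f) x v) 0 :=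
      hdiff.hasFDerivAt.comp_hasDerivAt_of_eq (0 : ℝ) (hline 0) (by simp)
    simpa using hchain.clm_apply (hasDerivAt_const (0 : ℝ) v)
  rw [← hderiv₂.deriv, ← hderiv.deriv_eq]
  refine deriv_deriv_nonneg_of_isLocalMin ?_ ?_
  · exact hf.continuousAt.comp_of_eq (hline 0).continuousAt (by simp)
  · simpa [IsLocalMin, IsMinFilter] using htendsto.eventually hmin

end SecondOrderConditions

section HessianMatrix

variable {n k : ℕ} {u φ : Euc n → ℝ} {y : Euc n}

lemma hessMat_apply (u : Euc n → ℝ) (y : Euc n) (i j : Fin n) :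
    hessMat n u y i j = fderiv ℝ (fderiv ℝ u) y (ebasis n i) (ebasis n j) := by
  simp [hessMat, iteratedFDeriv_two_apply]

lemma hessMat_apply_eq_fderiv (hu : ContDiffAt ℝ 2 u y) (i j : Fin n) :
    hessMat n u y i j = fderiv ℝ (fun x => fderiv ℝ u x (ebasis n j)) y (ebasis n i) := by
  rw [hessMat_apply, fderiv_clm_apply ((hu.fderiv_right (m := 1) (by norm_num)).differentiableAt
    (by norm_num)) (differentiableAt_const _)]
  simp

lemma isSymm_hessMat (hu : ContDiffAt ℝ 2 u y) : (hessMat n u y).IsSymm := by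
  refine Matrix.IsSymm.ext fun i j => ?_
  rw [hessMat_apply, hessMat_apply]
  exact hu.isSymmSndFDerivAt (by simp) _ _

lemma hessMat_sub (hu : ContDiffAt ℝ 2 u y) (hφ : ContDiffAt ℝ 2 φ y) :
    hessMat n (fun x => u x - φ x) y = hessMat n u y - hessMat n φ y := by
  ext i j
  exact congrArg (fun T => T ![ebasis n i, ebasis n j]) (iteratedFDeriv_sub_apply hu hφ)

lemma posSemidef_hessMat_of_isLocalMin (hu : ContDiffAt ℝ 2 u y) (hmin : IsLocalMin u y) :
    (hessMat n u y).PosSemidef := by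
  refine .of_dotProduct_mulVec_nonneg ?_ fun ξ => ?_
  · rw [Matrix.IsHermitian, Matrix.conjTranspose_eq_transpose_of_trivial]
    exact isSymm_hessMat hu
  · refine (fderiv_fderiv_apply_self_nonneg_of_isLocalMin hu hmin
      (∑ i, ξ i • ebasis n i)).trans_eq ?_
    simp only [map_sum, map_smul, sum_apply, smul_apply, smul_eq_mul,
      ← hessMat_apply, dotProduct, Matrix.mulVec, star_trivial, Finset.mul_sum]
    rw [Finset.sum_comm]
    simp only [mul_comm, mul_left_comm]

lemma matSk_hessMat_le_of_isLocalMin_sub (hkn : k ≤ n) (hu : ContDiffAt ℝ 2 u y)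
    (hφ : ContDiffAt ℝ 2 φ y) (hφk : hessMat n φ y ∈ GardingCone n k)
    (hmin : IsLocalMin (fun x => u x - φ x) y) : SkHess n k φ y ≤ SkHess n k u y := by
  refine matSk_le_matSk_of_posSemidef_sub hkn (isSymm_hessMat hφ) hφk ?_ le_rfl
  rw [← hessMat_sub hu hφ]
  exact posSemidef_hessMat_of_isLocalMin (hu.sub hφ) hmin

lemma quadA_diagonal (a : Fin n → ℝ) (x : Euc n) :
    quadA n (Matrix.diagonal a) x = 1 / 2 * ∑ i, a i * x i ^ 2 := by
  rw [quadA]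
  congr 1
  refine Finset.sum_congr rfl fun i _ => ?_
  rw [Finset.sum_eq_single i (fun j _ hj => by simp [Matrix.diagonal_apply_ne _ hj.symm]) (by simp),
    Matrix.diagonal_apply_eq]
  ring

lemma contDiff_quadA_sub (a : Fin n → ℝ) (z : Euc n) :
    ContDiff ℝ 2 fun x => quadA n (Matrix.diagonal a) (x - z) := by
  simp only [quadA_diagonal, PiLp.sub_apply]
  fun_prop

lemma fderiv_quadA_sub_apply (a : Fin n → ℝ) (z x : Euc n) (j : Fin n) :
    fderiv ℝ (fun x => quadA n (Matrix.diagonal a) (x - z)) x (ebasis n j) =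
      a j * (x j - z j) := by
  have hterm (i : Fin n) : HasFDerivAt (fun x : Euc n => a i * (x i - z i) ^ 2)
      ((2 * a i * (x i - z i)) • (EuclideanSpace.proj i : Euc n →L[ℝ] ℝ)) x := by
    have h := (((EuclideanSpace.proj i : Euc n →L[ℝ] ℝ).hasFDerivAt (x := x)).sub_const
      (z i)).pow 2 |>.const_mul (a i)
    refine h.congr_fderiv ?_
    ext v
    simp only [PiLp.proj_apply, Nat.add_one_sub_one, pow_one, nsmul_eq_mul, Nat.cast_ofNat,
      smul_apply, smul_eq_mul]
    ring
  have hsum := (HasFDerivAt.fun_sum fun i (_ : i ∈ Finset.univ) => hterm i).const_mul (1 / 2)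
  simp only [quadA_diagonal, PiLp.sub_apply]
  rw [hsum.fderiv]
  simp only [one_div, ebasis, smul_apply, sum_apply, PiLp.proj_apply, PiLp.single_apply,
    smul_eq_mul, mul_ite, mul_one, mul_zero, Finset.sum_ite_eq', Finset.mem_univ, ↓reduceIte]
  ring

lemma fderiv_comp_quadA_sub_apply {W : ℝ → ℝ} (a : Fin n → ℝ) (z x : Euc n) (j : Fin n)
    (hW : DifferentiableAt ℝ W (quadA n (Matrix.diagonal a) (x - z))) :
    fderiv ℝ (fun x => W (quadA n (Matrix.diagonal a) (x - z))) x (ebasis n j) =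
      deriv W (quadA n (Matrix.diagonal a) (x - z)) * (a j * (x j - z j)) := by
  have hq := ((contDiff_quadA_sub a z).differentiable (by norm_num) x).hasFDerivAt
  have hcomp : HasFDerivAt (fun x => W (quadA n (Matrix.diagonal a) (x - z))) _ x :=
    hW.hasDerivAt.comp_hasFDerivAt x hq
  rw [hcomp.fderiv, smul_apply, fderiv_quadA_sub_apply, smul_eq_mul]

lemma contDiffAt_comp_quadA_sub {W : ℝ → ℝ} (a : Fin n → ℝ) (z : Euc n)
    (hW : ContDiffAt ℝ 2 W (quadA n (Matrix.diagonal a) (y - z))) :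
    ContDiffAt ℝ 2 (fun x => W (quadA n (Matrix.diagonal a) (x - z))) y :=
  hW.comp y (contDiff_quadA_sub a z).contDiffAt

lemma hessMat_comp_quadA_sub {W : ℝ → ℝ} (a : Fin n → ℝ) (z : Euc n)
    (hW : ContDiffAt ℝ 2 W (quadA n (Matrix.diagonal a) (y - z))) :
    hessMat n (fun x => W (quadA n (Matrix.diagonal a) (x - z))) y =
      Matrix.diagonal (deriv W (quadA n (Matrix.diagonal a) (y - z)) • a) +
      deriv (deriv W) (quadA n (Matrix.diagonal a) (y - z)) •
        Matrix.vecMulVec (fun i => a i * (y i - z i)) (fun i => a i * (y i - z i)) := by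
  have hq : ContDiff ℝ 2 fun x => quadA n (Matrix.diagonal a) (x - z) := contDiff_quadA_sub a z
  have hW' : DifferentiableAt ℝ (deriv W) (quadA n (Matrix.diagonal a) (y - z)) :=
    (hW.derivWithin (m := 1) (by norm_num)).differentiableAt (by norm_num)
  ext i j
  have hgrad : (fun x => fderiv ℝ (fun x => W (quadA n (Matrix.diagonal a) (x - z))) x
      (ebasis n j)) =ᶠ[𝓝 y]
      fun x => deriv W (quadA n (Matrix.diagonal a) (x - z)) * (a j * (x j - z j)) := by
    filter_upwards [hq.continuous.continuousAt.eventually (hW.eventually (by simp))] with x hx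
    exact fderiv_comp_quadA_sub_apply a z x j (hx.differentiableAt (by norm_num))
  have hcoord : HasFDerivAt (fun x : Euc n => a j * (x j - z j))
      (a j • (EuclideanSpace.proj j : Euc n →L[ℝ] ℝ)) y :=
    ((EuclideanSpace.proj j : Euc n →L[ℝ] ℝ).hasFDerivAt.sub_const (z j)).const_mul (a j)
  have hgrad' : HasFDerivAt
      (fun x => deriv W (quadA n (Matrix.diagonal a) (x - z)) * (a j * (x j - z j)))
      (deriv W (quadA n (Matrix.diagonal a) (y - z)) • a j • EuclideanSpace.proj j +
        (a j * (y j - z j)) • fderiv ℝ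
          (fun x => deriv W (quadA n (Matrix.diagonal a) (x - z))) y) y :=
    ((hW'.comp y (hq.differentiable (by norm_num) y)).hasFDerivAt).mul hcoord
  rw [hessMat_apply_eq_fderiv (contDiffAt_comp_quadA_sub a z hW), hgrad.fderiv_eq,
    hgrad'.fderiv, add_apply, smul_apply, smul_apply, smul_apply,
    fderiv_comp_quadA_sub_apply a z y i hW']
  rcases eq_or_ne i j with rfl | hij
  · simp only [ebasis, PiLp.proj_apply, PiLp.single_eq_same, smul_eq_mul, mul_one,
      Matrix.diagonal_smul, Matrix.add_apply, Matrix.smul_apply, Matrix.diagonal_apply_eq,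
      Matrix.vecMulVec_apply, add_right_inj]
    ring
  · simp only [ebasis, PiLp.proj_apply, ne_eq, hij.symm, not_false_eq_true, PiLp.single_eq_of_ne,
      smul_eq_mul, mul_zero, zero_add, Matrix.diagonal_smul, Matrix.add_apply, Matrix.smul_apply,
      hij, Matrix.diagonal_apply_ne, Matrix.vecMulVec_apply]
    ring

end HessianMatrix

section Barriers

variable {n k m : ℕ} {a : Fin n → ℝ} {u φ : Euc n → ℝ} {y : Euc n} {U : Set (Euc n)} {W : ℝ → ℝ}

lemma hessMat_mem_gardingCone_of_kConvexOn (hu : KConvexOn n k u U) (hy : y ∈ U) :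
    hessMat n u y ∈ GardingCone n k := by
  rintro (_ | j) hj
  · rw [matSk_zero]
    exact one_pos
  · exact hu y hy (j + 1) (by omega) hj

/-- `φ` is a strict `k`-convex subsolution of `S_k(D²φ) = 1` at the point `y`. -/
def IsStrictSubsolutionAt (n k : ℕ) (φ : Euc n → ℝ) (y : Euc n) : Prop :=
  ContDiffAt ℝ 2 φ y ∧ hessMat n φ y ∈ GardingCone n k ∧ 1 < SkHess n k φ y

lemma not_isLocalMin_sub_of_isStrictSubsolutionAt (hkn : k ≤ n)
    (hφ : IsStrictSubsolutionAt n k φ y) (hu : ContDiffAt ℝ 2 u y) (hu₁ : SkHess n k u y = 1) :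
    ¬IsLocalMin (fun x => u x - φ x) y := fun hmin =>
  (hφ.2.2.trans_le (matSk_hessMat_le_of_isLocalMin_sub hkn hu hφ.1 hφ.2.1 hmin)).ne' hu₁

lemma matSk_hessMat_comp_quadA_sub (hm : m + 1 ≤ n) (a : Fin n → ℝ) (z : Euc n)
    (hW : ContDiffAt ℝ 2 W (quadA n (Matrix.diagonal a) (y - z))) :
    matSk n (m + 1) (hessMat n (fun x => W (quadA n (Matrix.diagonal a) (x - z))) y) =
      deriv W (quadA n (Matrix.diagonal a) (y - z)) ^ m *
        (deriv W (quadA n (Matrix.diagonal a) (y - z)) * esymmVec n (m + 1) a +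
          deriv (deriv W) (quadA n (Matrix.diagonal a) (y - z)) *
            ∑ i, (a i * (y i - z i)) ^ 2 * esymmVec n m (Function.update a i 0)) := by
  have hupdate (c : ℝ) (i : Fin n) :
      Function.update (c • a) i 0 = c • Function.update a i 0 := by
    rw [← Function.update_smul, smul_zero]
  rw [hessMat_comp_quadA_sub a z hW, matSk_diagonal_add_smul_vecMulVec hm]
  simp only [hupdate, esymmVec_smul, Finset.mul_sum, mul_add]
  congr 1
  · ring
  · exact Finset.sum_congr rfl fun i _ => by ring

lemma sum_sq_mul_esymmVec_update_le (hkn : k ≤ n) (ha : ∀ i, 0 < a i)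
    (hSk : esymmVec n k a = 1) (hm : m < k) (y : Euc n) :
    ∑ i, (a i * y i) ^ 2 * esymmVec n m (Function.update a i 0) ≤
      2 * hkfun n k a * quadA n (Matrix.diagonal a) y * esymmVec n (m + 1) a := by
  calc ∑ i, (a i * y i) ^ 2 * esymmVec n m (Function.update a i 0)
      = ∑ i, a i * y i ^ 2 * (a i * esymmVec n m (Function.update a i 0)) :=
        Finset.sum_congr rfl fun i _ => by ring
    _ ≤ ∑ i, a i * y i ^ 2 * (hkfun n k a * esymmVec n (m + 1) a) := by
        refine Finset.sum_le_sum fun i _ => mul_le_mul_of_nonneg_left ?_ ?_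
        · exact mul_esymmVec_update_le_hkfun_mul hkn ha hSk i hm
        · exact mul_nonneg (ha i).le (sq_nonneg _)
    _ = 2 * hkfun n k a * quadA n (Matrix.diagonal a) y * esymmVec n (m + 1) a := by
        rw [← Finset.sum_mul, quadA_diagonal]
        ring

lemma le_matSk_hessMat_comp_quadA (hkn : k ≤ n) (ha : ∀ i, 0 < a i)
    (hSk : esymmVec n k a = 1) (hm : m < k)
    (hW : ContDiffAt ℝ 2 W (quadA n (Matrix.diagonal a) y))
    (hW' : 0 ≤ deriv W (quadA n (Matrix.diagonal a) y))
    (hW'' : deriv (deriv W) (quadA n (Matrix.diagonal a) y) ≤ 0) :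
    deriv W (quadA n (Matrix.diagonal a) y) ^ m *
        (deriv W (quadA n (Matrix.diagonal a) y) + 2 * hkfun n k a *
          quadA n (Matrix.diagonal a) y * deriv (deriv W) (quadA n (Matrix.diagonal a) y)) *
        esymmVec n (m + 1) a ≤
      matSk n (m + 1) (hessMat n (fun x => W (quadA n (Matrix.diagonal a) x)) y) := by
  have hS := matSk_hessMat_comp_quadA_sub (hm.trans_le hkn) a 0 (by rwa [sub_zero])
  simp only [sub_zero, PiLp.zero_apply] at hS
  rw [hS, mul_assoc]
  refine mul_le_mul_of_nonneg_left ?_ (pow_nonneg hW' m)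
  have hle := mul_le_mul_of_nonpos_left (sum_sq_mul_esymmVec_update_le hkn ha hSk hm y) hW''
  linarith

lemma isStrictSubsolutionAt_comp_quadA (hk : 1 ≤ k) (hkn : k ≤ n) (ha : ∀ i, 0 < a i)
    (hSk : esymmVec n k a = 1) (hW : ContDiffAt ℝ 2 W (quadA n (Matrix.diagonal a) y))
    (hW' : 0 < deriv W (quadA n (Matrix.diagonal a) y))
    (hW'' : deriv (deriv W) (quadA n (Matrix.diagonal a) y) ≤ 0)
    (hode : 1 < deriv W (quadA n (Matrix.diagonal a) y) ^ (k - 1) *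
      (deriv W (quadA n (Matrix.diagonal a) y) + 2 * hkfun n k a *
        quadA n (Matrix.diagonal a) y * deriv (deriv W) (quadA n (Matrix.diagonal a) y))) :
    IsStrictSubsolutionAt n k (fun x => W (quadA n (Matrix.diagonal a) x)) y := by
  have hpos := pos_of_mul_pos_right (one_pos.trans hode) (by positivity)
  refine ⟨?_, ?_, ?_⟩
  · simpa using contDiffAt_comp_quadA_sub a 0 (by rwa [sub_zero])
  · rintro (_ | j) hj
    · rw [matSk_zero]
      exact one_pos
    · refine lt_of_lt_of_le ?_ (le_matSk_hessMat_comp_quadA hkn ha hSk hj hW hW'.le hW'')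
      exact mul_pos (by positivity) (esymmVec_pos ha (hj.trans hkn))
  · have hle := le_matSk_hessMat_comp_quadA hkn ha hSk (Nat.sub_one_lt_of_lt hk) hW hW'.le hW''
    rw [Nat.sub_add_cancel hk, hSk, mul_one] at hle
    exact hode.trans_le hle

lemma one_lt_esymmVec_two (hm : m + 1 ≤ n) : 1 < esymmVec n (m + 1) fun _ => 2 := by
  have hchoose : (1 : ℝ) ≤ n.choose (m + 1) := mod_cast Nat.choose_pos hm
  have hpow : (1 : ℝ) < 2 ^ (m + 1) := one_lt_pow₀ one_lt_two m.succ_ne_zero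
  rw [esymmVec, Finset.sum_congr rfl fun s hs =>
    (Finset.prod_const 2).trans (congrArg _ (Finset.mem_powersetCard.1 hs).2)]
  simpa using one_lt_mul hchoose hpow

lemma isStrictSubsolutionAt_norm_sub_sq_sub (hk : 1 ≤ k) (hkn : k ≤ n) (x₀ : Euc n) (c : ℝ)
    (y : Euc n) : IsStrictSubsolutionAt n k (fun x => ‖x - x₀‖ ^ 2 - c) y := by
  have hφ : (fun x : Euc n => ‖x - x₀‖ ^ 2 - c) =
      fun x => quadA n (Matrix.diagonal fun _ => 2) (x - x₀) - c := by
    ext x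
    rw [quadA_diagonal, ← Finset.mul_sum, EuclideanSpace.real_norm_sq_eq]
    ring
  have hW : ContDiff ℝ 2 fun s : ℝ => s - c := by fun_prop
  have hS {j : ℕ} (hj : j + 1 ≤ k) :
      1 < matSk n (j + 1) (hessMat n (fun x => ‖x - x₀‖ ^ 2 - c) y) := by
    rw [hφ, matSk_hessMat_comp_quadA_sub (hj.trans hkn) _ x₀ hW.contDiffAt]
    simpa using one_lt_esymmVec_two (hj.trans hkn)
  refine ⟨(((contDiff_id.sub contDiff_const).norm_sq ℝ).sub contDiff_const).contDiffAt, ?_, ?_⟩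
  · rintro (_ | j) hj
    · rw [matSk_zero]
      exact one_pos
    · exact one_pos.trans (hS hj)
  · obtain ⟨j, rfl⟩ := Nat.exists_eq_add_of_le' hk
    exact hS le_rfl

lemma forall_nonneg_of_forall_neg_exists_lt {ι X : Type*} [Finite ι] [TopologicalSpace X]
    {K : ι → Set X} {f : ι → X → ℝ} (hK : ∀ i, IsCompact (K i))
    (hf : ∀ i, ContinuousOn (f i) (K i))
    (hlt : ∀ i, ∀ y ∈ K i, f i y < 0 → ∃ j, ∃ z ∈ K j, f j z < f i y) :
    ∀ i, ∀ y ∈ K i, 0 ≤ f i y := by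
  by_contra! hneg
  obtain ⟨i, y, hy, hfy⟩ := hneg
  have hcompact : IsCompact (⋃ i, f i '' K i) :=
    isCompact_iUnion fun i => (hK i).image_of_continuousOn (hf i)
  obtain ⟨t, ht, hleast⟩ := hcompact.exists_isLeast ⟨_, Set.mem_iUnion_of_mem i ⟨y, hy, rfl⟩⟩
  obtain ⟨i', y', hy', rfl⟩ := Set.mem_iUnion.1 ht
  have hneg' := (hleast (Set.mem_iUnion_of_mem i ⟨y, hy, rfl⟩)).trans_lt hfy
  obtain ⟨j, z, hz, hjz⟩ := hlt i' y' hy' hneg'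
  exact (hleast (Set.mem_iUnion_of_mem j ⟨z, hz, rfl⟩)).not_gt hjz

lemma exists_lt_of_not_isLocalMin {X : Type*} [TopologicalSpace X] {K : Set X} {f : X → ℝ} {y : X}
    (hK : K ∈ 𝓝 y) (hmin : ¬IsLocalMin f y) : ∃ z ∈ K, f z < f y := by
  by_contra! hle
  exact hmin (mem_of_superset hK hle)

end Barriers

section RadialProfile

variable {n k : ℕ} {a : Fin n → ℝ} {R₀ α s t : ℝ}

/-- The primitive of `genInt` that vanishes at `R₀`; it is the profile of `ū`, which is by
definition `fun x => genPrim n k a R₀ α (quadA n (Matrix.diagonal a) x)`. -/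
noncomputable def genPrim (n k : ℕ) (a : Fin n → ℝ) (R₀ α s : ℝ) : ℝ :=
  ∫ t in R₀..s, genInt n k a α t

lemma one_le_genInt_base (hα : 0 ≤ α) (ht : 0 ≤ t) : 1 ≤ 1 + α * t ^ genExp n k a :=
  le_add_of_nonneg_right (mul_nonneg hα (rpow_nonneg ht _))

lemma one_le_genInt (hα : 0 ≤ α) (ht : 0 ≤ t) : 1 ≤ genInt n k a α t :=
  one_le_rpow (one_le_genInt_base hα ht) (by positivity)

lemma genInt_pow (hk : 1 ≤ k) (hα : 0 ≤ α) (ht : 0 ≤ t) :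
    genInt n k a α t ^ k = 1 + α * t ^ genExp n k a := by
  rw [genInt, one_div, rpow_inv_natCast_pow (one_pos.le.trans (one_le_genInt_base hα ht))
    (by omega)]

lemma genInt_le (hk : 1 ≤ k) (hα : 0 ≤ α) (ht : 0 ≤ t) :
    genInt n k a α t ≤ 1 + α * t ^ genExp n k a := by
  rw [← genInt_pow hk hα ht]
  exact le_self_pow₀ (one_le_genInt hα ht) (by omega)

lemma contDiffOn_genInt (hα : 0 ≤ α) : ContDiffOn ℝ 1 (genInt n k a α) (Set.Ioi 0) := by
  intro t (ht : 0 < t)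
  have hbase : ContDiffAt ℝ 1 (fun t => 1 + α * t ^ genExp n k a) t :=
    contDiffAt_const.add (contDiffAt_const.mul (contDiffAt_rpow_const_of_ne ht.ne'))
  exact (hbase.rpow_const_of_ne
    (one_pos.trans_le (one_le_genInt_base hα ht.le)).ne').contDiffWithinAt

lemma intervalIntegrable_genInt (hα : 0 ≤ α) (hs : 0 < s) (ht : 0 < t) :
    IntervalIntegrable (genInt n k a α) volume s t :=
  ((contDiffOn_genInt hα).continuousOn.mono fun _ hr =>
    (lt_min hs ht).trans_le hr.1).intervalIntegrable

lemma pow_pred_mul_deriv_genInt (hk : 1 ≤ k) (hα : 0 ≤ α) (ht : 0 < t) :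
    k * genInt n k a α t ^ (k - 1) * deriv (genInt n k a α) t =
      α * (genExp n k a * t ^ (genExp n k a - 1)) := by
  have hdiff : DifferentiableAt ℝ (genInt n k a α) t :=
    ((contDiffOn_genInt hα).contDiffAt (Ioi_mem_nhds ht)).differentiableAt one_ne_zero
  have hbase : HasDerivAt (fun t => 1 + α * t ^ genExp n k a)
      (α * (genExp n k a * t ^ (genExp n k a - 1))) t :=
    ((hasDerivAt_rpow_const (.inl ht.ne')).const_mul α).const_add 1
  refine (hdiff.hasDerivAt.pow k).unique (hbase.congr_of_eventuallyEq ?_)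
  filter_upwards [Ioi_mem_nhds ht] with r hr using genInt_pow hk hα (le_of_lt hr)

lemma genExp_nonpos (hh : 0 ≤ hkfun n k a) : genExp n k a ≤ 0 :=
  div_nonpos_of_nonpos_of_nonneg (by simp) (by positivity)

lemma deriv_genInt_nonpos (hk : 1 ≤ k) (hh : 0 ≤ hkfun n k a) (hα : 0 ≤ α) (ht : 0 < t) :
    deriv (genInt n k a α) t ≤ 0 := by
  have hprod : k * genInt n k a α t ^ (k - 1) * deriv (genInt n k a α) t ≤ 0 := by
    rw [pow_pred_mul_deriv_genInt hk hα ht]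
    exact mul_nonpos_of_nonneg_of_nonpos hα
      (mul_nonpos_of_nonpos_of_nonneg (genExp_nonpos hh) (rpow_nonneg ht.le _))
  have hw := one_pos.trans_le (one_le_genInt (n := n) (k := k) (a := a) hα ht.le)
  exact nonpos_of_mul_nonpos_right hprod (by positivity)

lemma genInt_pow_pred_mul_add_deriv (hk : 1 ≤ k) (hh : 0 < hkfun n k a) (hα : 0 ≤ α)
    (ht : 0 < t) : genInt n k a α t ^ (k - 1) *
      (genInt n k a α t + 2 * hkfun n k a * t * deriv (genInt n k a α) t) = 1 := by
  have hk₀ : (k : ℝ) ≠ 0 := by positivity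
  have hexp : genExp n k a * (2 * hkfun n k a) = -k := by
    rw [genExp]
    field_simp
  have hcross : genInt n k a α t ^ (k - 1) * (2 * hkfun n k a * t * deriv (genInt n k a α) t) =
      -(α * t ^ genExp n k a) := by
    have hderiv := pow_pred_mul_deriv_genInt (n := n) (a := a) hk hα ht
    have hcancel : t * (t ^ genExp n k a / t) = t ^ genExp n k a := mul_div_cancel₀ _ ht.ne'
    rw [rpow_sub_one ht.ne'] at hderiv
    refine mul_left_cancel₀ hk₀ ?_
    linear_combination 2 * hkfun n k a * t * hderiv +
      2 * hkfun n k a * α * genExp n k a * hcancel + α * t ^ genExp n k a * hexp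
  rw [mul_add, hcross, ← pow_succ, Nat.sub_add_cancel hk, genInt_pow hk hα ht.le]
  ring

lemma hasDerivAt_genPrim (hR₀ : 0 < R₀) (hα : 0 ≤ α) (hs : 0 < s) :
    HasDerivAt (genPrim n k a R₀ α) (genInt n k a α s) s := by
  have hcont := (contDiffOn_genInt (n := n) (k := k) (a := a) hα).continuousOn
  exact intervalIntegral.integral_hasDerivAt_right (intervalIntegrable_genInt hα hR₀ hs)
    (hcont.stronglyMeasurableAtFilter isOpen_Ioi s hs) (hcont.continuousAt (Ioi_mem_nhds hs))

lemma deriv_genPrim_eqOn (hR₀ : 0 < R₀) (hα : 0 ≤ α) :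
    Set.EqOn (deriv (genPrim n k a R₀ α)) (genInt n k a α) (Set.Ioi 0) :=
  fun _ hs => (hasDerivAt_genPrim hR₀ hα hs).deriv

lemma contDiffOn_genPrim (hR₀ : 0 < R₀) (hα : 0 ≤ α) :
    ContDiffOn ℝ 2 (genPrim n k a R₀ α) (Set.Ioi 0) := by
  refine (contDiffOn_succ_iff_deriv_of_isOpen (n := 1) isOpen_Ioi).2
    ⟨fun s hs => (hasDerivAt_genPrim hR₀ hα hs).differentiableAt.differentiableWithinAt,
      by simp, (contDiffOn_genInt hα).congr (deriv_genPrim_eqOn hR₀ hα)⟩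

lemma genPrim_nonpos (hα : 0 ≤ α) (hs : 0 ≤ s) (hsR₀ : s ≤ R₀) : genPrim n k a R₀ α s ≤ 0 := by
  rw [genPrim, intervalIntegral.integral_symm, neg_nonpos]
  exact intervalIntegral.integral_nonneg hsR₀ fun t ht =>
    zero_le_one.trans (one_le_genInt hα (hs.trans ht.1))

lemma monotoneOn_genPrim (hR₀ : 0 < R₀) (hα : 0 ≤ α) :
    MonotoneOn (genPrim n k a R₀ α) (Set.Ioi 0) := by
  have hdiff := (contDiffOn_genPrim (n := n) (k := k) (a := a) hR₀ hα).differentiableOn two_ne_zero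
  refine monotoneOn_of_deriv_nonneg (convex_Ioi 0) hdiff.continuousOn
    (hdiff.mono interior_subset) fun s hs => ?_
  rw [interior_Ioi] at hs
  rw [deriv_genPrim_eqOn hR₀ hα hs]
  exact zero_le_one.trans (one_le_genInt hα (le_of_lt hs))

lemma antitoneOn_genInt (hh : 0 ≤ hkfun n k a) (hα : 0 ≤ α) :
    AntitoneOn (genInt n k a α) (Set.Ioi 0) := fun t (ht : 0 < t) s _ hts =>
  rpow_le_rpow (one_pos.le.trans (one_le_genInt_base hα (ht.le.trans hts)))
    (by gcongr 1 + α * ?_; exact rpow_le_rpow_of_nonpos ht hts (genExp_nonpos hh)) (by positivity)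

lemma tendsto_genPrim_atTop (hk : 1 ≤ k) (hh : 0 ≤ hkfun n k a) (hR₀ : 0 < R₀) (hs : R₀ < s) :
    Tendsto (fun α => genPrim n k a R₀ α s) atTop atTop := by
  have hs₀ : 0 < s := hR₀.trans hs
  have hbase : Tendsto (fun α => 1 + α * s ^ genExp n k a) atTop atTop :=
    tendsto_atTop_add_const_left _ _ (tendsto_id.atTop_mul_const (rpow_pos_of_pos hs₀ _))
  have hgen : Tendsto (fun α => (s - R₀) * genInt n k a α s) atTop atTop :=
    ((tendsto_rpow_atTop (by positivity)).comp hbase).const_mul_atTop (sub_pos.2 hs)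
  refine tendsto_atTop_mono' _ ?_ hgen
  filter_upwards [eventually_ge_atTop 0] with α hα
  have hle := intervalIntegral.integral_mono_on hs.le (intervalIntegrable_const (μ := volume))
    (intervalIntegrable_genInt hα hR₀ hs₀) fun t ht =>
      antitoneOn_genInt hh hα (hR₀.trans_le ht.1) hs₀ ht.2
  simpa [genPrim] using hle

lemma integrableOn_genInt_sub_one (hk : 1 ≤ k) (hh : 0 < hkfun n k a)
    (hhk : 2 * hkfun n k a < k) (hR₀ : 0 < R₀) (hα : 0 ≤ α) :
    IntegrableOn (fun t => genInt n k a α t - 1) (Set.Ioi R₀) := by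
  have hexp : genExp n k a < -1 := by
    rw [genExp, neg_div, neg_lt_neg_iff, one_lt_div (by positivity)]
    exact hhk
  have hcont : ContinuousOn (fun t => genInt n k a α t - 1) (Set.Ioi R₀) :=
    ((contDiffOn_genInt hα).continuousOn.mono (Set.Ioi_subset_Ioi hR₀.le)).sub continuousOn_const
  refine ((integrableOn_Ioi_rpow_of_lt hexp hR₀).const_mul α).mono'
    (hcont.aestronglyMeasurable measurableSet_Ioi) ?_
  filter_upwards [ae_restrict_mem measurableSet_Ioi] with t (ht : R₀ < t)
  have ht₀ : 0 ≤ t := (hR₀.trans ht).le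
  rw [norm_of_nonneg (sub_nonneg.2 (one_le_genInt hα ht₀)), sub_le_iff_le_add']
  exact genInt_le hk hα ht₀

lemma genPrim_le_add_muA (hk : 1 ≤ k) (hh : 0 < hkfun n k a) (hhk : 2 * hkfun n k a < k)
    (hR₀ : 0 < R₀) (hα : 0 ≤ α) (hs : R₀ ≤ s) :
    genPrim n k a R₀ α s ≤ s + muA n k a R₀ α := by
  have hmono : ∫ t in R₀..s, (genInt n k a α t - 1) ≤
      ∫ t in Set.Ioi R₀, (genInt n k a α t - 1) := by
    rw [intervalIntegral.integral_of_le hs]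
    refine setIntegral_mono_set (integrableOn_genInt_sub_one hk hh hhk hR₀ hα) ?_
      Set.Ioc_subset_Ioi_self.eventuallyLE
    filter_upwards [ae_restrict_mem measurableSet_Ioi] with t (ht : R₀ < t)
    exact sub_nonneg.2 (one_le_genInt hα (hR₀.trans ht).le)
  rw [intervalIntegral.integral_sub (intervalIntegrable_genInt hα hR₀ (hR₀.trans_le hs))
    intervalIntegrable_const, intervalIntegral.integral_const, smul_eq_mul, mul_one] at hmono
  rw [genPrim, muA]
  linarith

end RadialProfile

section EllipsoidalRing

variable {n k : ℕ} {a : Fin n → ℝ} {x₀ x y : Euc n} {ε R : ℝ} {u : Euc n → ℝ} {S : Set (Euc n)}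

lemma continuous_quadA_diagonal (a : Fin n → ℝ) : Continuous (quadA n (Matrix.diagonal a)) := by
  simpa using (contDiff_quadA_sub a 0).continuous

lemma quadA_diagonal_nonneg (ha : ∀ i, 0 ≤ a i) (x : Euc n) :
    0 ≤ quadA n (Matrix.diagonal a) x := by
  rw [quadA_diagonal]
  exact mul_nonneg (by norm_num) (Finset.sum_nonneg fun i _ => mul_nonneg (ha i) (sq_nonneg _))

lemma quadA_diagonal_le_sum_mul_norm_sq (ha : ∀ i, 0 ≤ a i) (x : Euc n) :
    quadA n (Matrix.diagonal a) x ≤ (∑ i, a i) * ‖x‖ ^ 2 := by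
  have hcoord (i : Fin n) : x i ^ 2 ≤ ‖x‖ ^ 2 := by
    rw [← sq_abs, ← Real.norm_eq_abs]
    gcongr
    exact PiLp.norm_apply_le x i
  have hsum : ∑ i, a i * x i ^ 2 ≤ (∑ i, a i) * ‖x‖ ^ 2 := by
    rw [Finset.sum_mul]
    exact Finset.sum_le_sum fun i _ => mul_le_mul_of_nonneg_left (hcoord i) (ha i)
  have hnonneg := quadA_diagonal_nonneg ha x
  rw [quadA_diagonal] at hnonneg ⊢
  linarith

lemma isCompact_quadA_diagonal_le (ha : ∀ i, 0 < a i) (r : ℝ) :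
    IsCompact {x | quadA n (Matrix.diagonal a) x ≤ r} := by
  obtain ⟨c, hc, hca⟩ := Pi.exists_forall_pos_add_lt ha
  have hlower (x : Euc n) : c * ‖x‖ ^ 2 ≤ 2 * quadA n (Matrix.diagonal a) x := by
    rw [quadA_diagonal, EuclideanSpace.real_norm_sq_eq, Finset.mul_sum, ← mul_assoc,
      mul_one_div_cancel two_ne_zero, one_mul]
    gcongr with i
    simpa using (hca i).le
  refine Metric.isCompact_of_isClosed_isBounded
    (isClosed_le (continuous_quadA_diagonal a) continuous_const)
    ((Metric.isBounded_closedBall (x := 0) (r := √(2 * r / c))).subset fun x hx => ?_)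
  rw [mem_closedBall_zero_iff]
  refine le_sqrt_of_sq_le ((le_div_iff₀' hc).2 ((hlower x).trans ?_))
  exact mul_le_mul_of_nonneg_left hx two_pos.le

lemma mem_omegaRe (hε : 0 < ε) :
    y ∈ OmegaRe n a x₀ ε R ↔ quadA n (Matrix.diagonal a) y < R ∧ ε < ‖y - x₀‖ := by
  rw [OmegaRe, ESet, closure_ball _ hε.ne']
  simp [dist_eq_norm]

lemma isOpen_omegaRe : IsOpen (OmegaRe n a x₀ ε R) := by
  rw [OmegaRe, ESet]
  simp only [sub_zero]
  exact (isOpen_lt (continuous_quadA_diagonal a) continuous_const).sdiff isClosed_closure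

lemma closure_omegaRe_subset_quadA_le :
    closure (OmegaRe n a x₀ ε R) ⊆ {x | quadA n (Matrix.diagonal a) x ≤ R} :=
  closure_minimal (fun x hx => le_of_lt (by simpa [ESet] using hx.1))
    (isClosed_le (continuous_quadA_diagonal a) continuous_const)

lemma isCompact_closure_omegaRe (ha : ∀ i, 0 < a i) :
    IsCompact (closure (OmegaRe n a x₀ ε R)) :=
  (isCompact_quadA_diagonal_le ha R).of_isClosed_subset isClosed_closure
    closure_omegaRe_subset_quadA_le

lemma le_norm_sub_of_mem_closure_omegaRe (hε : 0 < ε) (hy : y ∈ closure (OmegaRe n a x₀ ε R)) :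
    ε ≤ ‖y - x₀‖ := by
  have hclosed : IsClosed {y | ε ≤ ‖y - x₀‖} := isClosed_le continuous_const (by fun_prop)
  exact closure_minimal (fun y hy => ((mem_omegaRe hε).1 hy).2.le) hclosed hy

lemma mem_closure_omegaRe_cases (hε : 0 < ε) (hy : y ∈ closure (OmegaRe n a x₀ ε R)) :
    y ∈ Metric.sphere x₀ ε ∨ quadA n (Matrix.diagonal a) y = R ∨ y ∈ OmegaRe n a x₀ ε R := by
  rw [mem_omegaRe hε, mem_sphere_iff_norm]
  rcases (le_norm_sub_of_mem_closure_omegaRe hε hy).eq_or_lt with hnorm | hnorm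
  · exact .inl hnorm.symm
  · exact .inr ((closure_omegaRe_subset_quadA_le hy).eq_or_lt.imp_right (⟨·, hnorm⟩))

lemma contDiffAt_of_smoothOnNhd (hu : SmoothOnNhd n u S) (hy : y ∈ S) : ContDiffAt ℝ 2 u y := by
  obtain ⟨U, hU, hSU, hsmooth⟩ := hu
  exact (hsmooth.contDiffAt (hU.mem_nhds (hSU hy))).of_le
    (WithTop.coe_le_coe.2 (le_top : (2 : ℕ∞) ≤ ⊤))

lemma exists_bound_norm_sub_sq_of_quadA_le (ha : ∀ i, 0 < a i) (r ρ : ℝ) :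
    ∃ V, ∀ x₀ ∈ Metric.ball (0 : Euc n) ρ, ∀ y,
      quadA n (Matrix.diagonal a) y ≤ r → ‖y - x₀‖ ^ 2 ≤ V := by
  obtain ⟨C, hC⟩ := (isCompact_quadA_diagonal_le ha r).isBounded.exists_norm_le
  refine ⟨(C + ρ) ^ 2, fun x₀ hx₀ y hy => ?_⟩
  gcongr
  exact (norm_sub_le y x₀).trans (add_le_add (hC y hy) (mem_ball_zero_iff.1 hx₀).le)

end EllipsoidalRing

section Comparison

variable {n k : ℕ} {a : Fin n → ℝ} {x₀ x y : Euc n} {R₀ r R α ε δ μ : ℝ} {u φ : Euc n → ℝ}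

/-- The subsolution `‖x - x₀‖² - ε²`, vanishing on `∂B_ε(x₀)`, which is compared with solutions
near the removed ball. -/
noncomputable def innerBarrier (x₀ : Euc n) (ε : ℝ) (x : Euc n) : ℝ := ‖x - x₀‖ ^ 2 - ε ^ 2

/-- The strict subsolution obtained by scaling `ū` by `1 + δ`, which is compared with solutions
away from the removed ball. The constant is chosen so that it agrees with `ū` on `∂E_R(0)`. -/
noncomputable def outerBarrier (n k : ℕ) (a : Fin n → ℝ) (R₀ R α δ : ℝ) (x : Euc n) : ℝ :=
  (1 + δ) * ubar n k a R₀ α x - δ * genPrim n k a R₀ α R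

lemma isStrictSubsolutionAt_innerBarrier (hk : 1 ≤ k) (hkn : k ≤ n) (x₀ : Euc n) (ε : ℝ)
    (y : Euc n) : IsStrictSubsolutionAt n k (innerBarrier x₀ ε) y :=
  isStrictSubsolutionAt_norm_sub_sq_sub hk hkn x₀ (ε ^ 2) y

lemma isStrictSubsolutionAt_outerBarrier (hk : 1 ≤ k) (hkn : k ≤ n) (ha : ∀ i, 0 < a i)
    (hSk : esymmVec n k a = 1) (hR₀ : 0 < R₀) (hα : 0 ≤ α) (hδ : 0 < δ)
    (hy : 0 < quadA n (Matrix.diagonal a) y) :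
    IsStrictSubsolutionAt n k (outerBarrier n k a R₀ R α δ) y := by
  have hh := hkfun_pos hk hkn ha
  have hderiv : Set.EqOn
      (deriv fun s => (1 + δ) * genPrim n k a R₀ α s - δ * genPrim n k a R₀ α R)
      (fun s => (1 + δ) * genInt n k a α s) (Set.Ioi 0) := fun s hs =>
    (((hasDerivAt_genPrim hR₀ hα hs).const_mul (1 + δ)).sub_const _).deriv
  have hderiv₂ : deriv (deriv fun s => (1 + δ) * genPrim n k a R₀ α s - δ * genPrim n k a R₀ α R)
      (quadA n (Matrix.diagonal a) y) =
      (1 + δ) * deriv (genInt n k a α) (quadA n (Matrix.diagonal a) y) := by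
    rw [(hderiv.eventuallyEq_of_mem (Ioi_mem_nhds hy)).deriv_eq, deriv_const_mul_field]
  refine isStrictSubsolutionAt_comp_quadA hk hkn ha hSk
    (W := fun s => (1 + δ) * genPrim n k a R₀ α s - δ * genPrim n k a R₀ α R) ?_ ?_ ?_ ?_
  · exact (contDiffAt_const.mul
      ((contDiffOn_genPrim hR₀ hα).contDiffAt (Ioi_mem_nhds hy))).sub contDiffAt_const
  · rw [hderiv hy]
    exact mul_pos (by positivity) (one_pos.trans_le (one_le_genInt hα hy.le))
  · rw [hderiv₂]
    exact mul_nonpos_of_nonneg_of_nonpos (by positivity) (deriv_genInt_nonpos hk hh.le hα hy)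
  · rw [hderiv₂, hderiv hy]
    have hode := genInt_pow_pred_mul_add_deriv hk hh hα hy
    calc 1 < (1 + δ) ^ k := one_lt_pow₀ (by linarith) (by omega)
      _ = (1 + δ) ^ (k - 1) * (1 + δ) * 1 := by rw [pow_sub_one_mul (by omega), mul_one]
      _ = _ := by
        rw [← hode, mul_pow]
        ring

lemma exists_lt_of_isStrictSubsolutionAt (hkn : k ≤ n) (hu : ApproxSol n k a x₀ ε R R₀ α u)
    (hy : y ∈ OmegaRe n a x₀ ε R) (hφ : IsStrictSubsolutionAt n k φ y) {N : Set (Euc n)}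
    (hN : N ∈ 𝓝 y) : ∃ z ∈ closure (OmegaRe n a x₀ ε R) ∩ N, u z - φ z < u y - φ y := by
  refine exists_lt_of_not_isLocalMin (inter_mem ?_ hN)
    (not_isLocalMin_sub_of_isStrictSubsolutionAt hkn hφ
      (contDiffAt_of_smoothOnNhd hu.1 (subset_closure hy)) (hu.2.2.1 y hy))
  exact mem_of_superset (isOpen_omegaRe.mem_nhds hy) subset_closure

lemma outerBarrier_of_quadA_eq (hy : quadA n (Matrix.diagonal a) y = R) :
    outerBarrier n k a R₀ R α δ y = ubar n k a R₀ α y := by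
  rw [outerBarrier, ubar, hy, ← genPrim]
  ring

lemma continuousOn_closure_of_approxSol (hu : ApproxSol n k a x₀ ε R R₀ α u) :
    ContinuousOn u (closure (OmegaRe n a x₀ ε R)) := fun _ hy =>
  (contDiffAt_of_smoothOnNhd hu.1 hy).continuousAt.continuousWithinAt

lemma innerBarrier_nonneg_of_mem_closure_omegaRe (hε : 0 < ε)
    (hy : y ∈ closure (OmegaRe n a x₀ ε R)) : 0 ≤ innerBarrier x₀ ε y :=
  sub_nonneg.2 (pow_le_pow_left₀ hε.le (le_norm_sub_of_mem_closure_omegaRe hε hy) 2)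

lemma exists_lt_of_sub_innerBarrier_neg (hk : 1 ≤ k) (hkn : k ≤ n) (hε : 0 < ε) (hR₀r : R₀ ≤ r)
    (hrR : r < R) (hu : ApproxSol n k a x₀ ε R R₀ α u)
    (hr : ∀ y, quadA n (Matrix.diagonal a) y = r →
      innerBarrier x₀ ε y < outerBarrier n k a R₀ R α δ y)
    (hy : y ∈ closure (OmegaRe n a x₀ ε R)) (hyr : quadA n (Matrix.diagonal a) y ≤ r)
    (hneg : u y - innerBarrier x₀ ε y < 0) :
    (∃ z ∈ closure (OmegaRe n a x₀ ε R) ∩ {x | quadA n (Matrix.diagonal a) x ≤ r},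
      u z - innerBarrier x₀ ε z < u y - innerBarrier x₀ ε y) ∨
    ∃ z ∈ closure (OmegaRe n a x₀ ε R) ∩ {x | R₀ ≤ quadA n (Matrix.diagonal a) x},
      u z - outerBarrier n k a R₀ R α δ z < u y - innerBarrier x₀ ε y := by
  rcases hyr.eq_or_lt with hyr | hyr
  · exact .inr ⟨y, ⟨hy, hR₀r.trans hyr.ge⟩, sub_lt_sub_left (hr y hyr) _⟩
  left
  rcases mem_closure_omegaRe_cases hε hy with hsphere | hyR | hΩ
  · rw [hu.2.2.2.1 y hsphere, innerBarrier, mem_sphere_iff_norm.1 hsphere] at hneg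
    linarith
  · linarith
  · refine exists_lt_of_isStrictSubsolutionAt hkn hu hΩ
      (isStrictSubsolutionAt_innerBarrier hk hkn x₀ ε y) ?_
    exact (continuous_quadA_diagonal a).continuousAt (Iic_mem_nhds hyr)

lemma exists_lt_of_sub_outerBarrier_neg (hk : 1 ≤ k) (hkn : k ≤ n) (ha : ∀ i, 0 < a i)
    (hSk : esymmVec n k a = 1) (hR₀ : 0 < R₀) (hα : 0 ≤ α) (hε : 0 < ε) (hδ : 0 < δ)
    (hR₀r : R₀ ≤ r) (hR : 0 < genPrim n k a R₀ α R) (hu : ApproxSol n k a x₀ ε R R₀ α u)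
    (hball : ∀ y ∈ Metric.sphere x₀ ε, quadA n (Matrix.diagonal a) y < R₀)
    (hy : y ∈ closure (OmegaRe n a x₀ ε R)) (hyR₀ : R₀ ≤ quadA n (Matrix.diagonal a) y)
    (hneg : u y - outerBarrier n k a R₀ R α δ y < 0) :
    (∃ z ∈ closure (OmegaRe n a x₀ ε R) ∩ {x | quadA n (Matrix.diagonal a) x ≤ r},
      u z - innerBarrier x₀ ε z < u y - outerBarrier n k a R₀ R α δ y) ∨
    ∃ z ∈ closure (OmegaRe n a x₀ ε R) ∩ {x | R₀ ≤ quadA n (Matrix.diagonal a) x},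
      u z - outerBarrier n k a R₀ R α δ z < u y - outerBarrier n k a R₀ R α δ y := by
  rcases hyR₀.eq_or_lt with hyR₀ | hyR₀
  · have houter : outerBarrier n k a R₀ R α δ y < 0 := by
      rw [outerBarrier, ubar, ← hyR₀, intervalIntegral.integral_same]
      linarith [mul_pos hδ hR]
    have hinner : 0 ≤ innerBarrier x₀ ε y := innerBarrier_nonneg_of_mem_closure_omegaRe hε hy
    exact .inl ⟨y, ⟨hy, hyR₀.ge.trans hR₀r⟩, sub_lt_sub_left (houter.trans_le hinner) _⟩
  right
  rcases mem_closure_omegaRe_cases hε hy with hsphere | hyR | hΩ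
  · exact absurd (hball y hsphere) hyR₀.not_gt
  · rw [outerBarrier_of_quadA_eq hyR, hu.2.2.2.2 y hyR, sub_self] at hneg
    exact absurd hneg (lt_irrefl 0)
  · refine exists_lt_of_isStrictSubsolutionAt hkn hu hΩ
      (isStrictSubsolutionAt_outerBarrier hk hkn ha hSk hR₀ hα hδ (hR₀.trans hyR₀)) ?_
    exact (continuous_quadA_diagonal a).continuousAt (Ici_mem_nhds hyR₀)

lemma continuousOn_outerBarrier (hR₀ : 0 < R₀) (hα : 0 ≤ α) :
    ContinuousOn (outerBarrier n k a R₀ R α δ)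
      {x | R₀ ≤ quadA n (Matrix.diagonal a) x} := by
  have hubar : ContinuousOn (ubar n k a R₀ α) {x | R₀ ≤ quadA n (Matrix.diagonal a) x} :=
    (contDiffOn_genPrim hR₀ hα).continuousOn.comp (continuous_quadA_diagonal a).continuousOn
      fun x hx => hR₀.trans_le hx
  exact (hubar.const_mul _).sub continuousOn_const

lemma innerBarrier_lt_outerBarrier (hδ : 0 ≤ δ)
    (hδε : δ * genPrim n k a R₀ α R < ε ^ 2)
    (hr : ‖y - x₀‖ ^ 2 ≤ genPrim n k a R₀ α r) (hy : quadA n (Matrix.diagonal a) y = r) :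
    innerBarrier x₀ ε y < outerBarrier n k a R₀ R α δ y := by
  have hmul : 0 ≤ δ * genPrim n k a R₀ α r :=
    mul_nonneg hδ ((sq_nonneg _).trans hr)
  rw [innerBarrier, outerBarrier, ubar, hy, ← genPrim]
  linarith

lemma barriers_le_of_approxSol (hk : 1 ≤ k) (hkn : k ≤ n) (ha : ∀ i, 0 < a i)
    (hSk : esymmVec n k a = 1) (hR₀ : 0 < R₀) (hα : 0 ≤ α) (hε : 0 < ε) (hδ : 0 < δ)
    (hR₀r : R₀ ≤ r) (hrR : r < R) (hR : 0 < genPrim n k a R₀ α R)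
    (hδε : δ * genPrim n k a R₀ α R < ε ^ 2)
    (hball : ∀ y ∈ Metric.sphere x₀ ε, quadA n (Matrix.diagonal a) y < R₀)
    (hr : ∀ y, quadA n (Matrix.diagonal a) y = r → ‖y - x₀‖ ^ 2 ≤ genPrim n k a R₀ α r)
    (hu : ApproxSol n k a x₀ ε R R₀ α u) (hy : y ∈ closure (OmegaRe n a x₀ ε R)) :
    (quadA n (Matrix.diagonal a) y ≤ r → innerBarrier x₀ ε y ≤ u y) ∧
      (R₀ ≤ quadA n (Matrix.diagonal a) y → outerBarrier n k a R₀ R α δ y ≤ u y) := by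
  have hK : IsCompact (closure (OmegaRe n a x₀ ε R)) := isCompact_closure_omegaRe ha
  have hq := continuous_quadA_diagonal a
  have hu_cont := continuousOn_closure_of_approxSol hu
  let K : Bool → Set (Euc n) := fun outer => closure (OmegaRe n a x₀ ε R) ∩
    if outer then {x | R₀ ≤ quadA n (Matrix.diagonal a) x}
    else {x | quadA n (Matrix.diagonal a) x ≤ r}
  let φ : Bool → Euc n → ℝ := fun outer =>
    if outer then outerBarrier n k a R₀ R α δ else innerBarrier x₀ ε
  have hcomparison := forall_nonneg_of_forall_neg_exists_lt (K := K) (f := fun i x => u x - φ i x)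
    (Bool.forall_bool.2 ⟨hK.inter_right (isClosed_le hq continuous_const),
      hK.inter_right (isClosed_le continuous_const hq)⟩)
    (Bool.forall_bool.2 ⟨(hu_cont.mono Set.inter_subset_left).sub ?_,
      (hu_cont.mono Set.inter_subset_left).sub
        ((continuousOn_outerBarrier hR₀ hα).mono Set.inter_subset_right)⟩)
    (Bool.forall_bool.2 ⟨fun y hy hneg => ?_, fun y hy hneg => ?_⟩)
  · exact ⟨fun hyr => sub_nonneg.1 (hcomparison false y ⟨hy, hyr⟩),
      fun hyR₀ => sub_nonneg.1 (hcomparison true y ⟨hy, hyR₀⟩)⟩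
  · exact (by unfold innerBarrier; fun_prop : Continuous (innerBarrier x₀ ε)).continuousOn
  · exact Bool.exists_bool.2 (exists_lt_of_sub_innerBarrier_neg hk hkn hε hR₀r hrR hu
      (fun z hz => innerBarrier_lt_outerBarrier hδ.le hδε (hr z hz) hz) hy.1 hy.2 hneg)
  · exact Bool.exists_bool.2 (exists_lt_of_sub_outerBarrier_neg hk hkn ha hSk hR₀ hα hε hδ hR₀r hR
      hu hball hy.1 hy.2 hneg)

end Comparison

section Bounds

variable {n k : ℕ} {a : Fin n → ℝ} {x₀ x y : Euc n} {R₀ r R α ε δ μ : ℝ} {u : Euc n → ℝ}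

theorem ubar_le_of_approxSol (hk : 1 ≤ k) (hkn : k ≤ n) (ha : ∀ i, 0 < a i)
    (hSk : esymmVec n k a = 1) (hR₀ : 0 < R₀) (hα : 0 ≤ α) (hε : 0 < ε) (hR₀r : R₀ ≤ r)
    (hrR : r < R) (hr₀ : 0 < genPrim n k a R₀ α r)
    (hball : ∀ y ∈ Metric.sphere x₀ ε, quadA n (Matrix.diagonal a) y < R₀)
    (hr : ∀ y, quadA n (Matrix.diagonal a) y = r → ‖y - x₀‖ ^ 2 ≤ genPrim n k a R₀ α r)
    (hu : ApproxSol n k a x₀ ε R R₀ α u) (hx : x ∈ closure (OmegaRe n a x₀ ε R)) :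
    ubar n k a R₀ α x ≤ u x := by
  have hR : 0 < genPrim n k a R₀ α R := hr₀.trans_le
    (monotoneOn_genPrim hR₀ hα (hR₀.trans_le hR₀r) (hR₀.trans_le (hR₀r.trans hrR.le)) hrR.le)
  have hsmall : ∀ᶠ δ in 𝓝[>] (0 : ℝ), 0 < δ ∧ δ * genPrim n k a R₀ α R < ε ^ 2 := by
    refine (eventually_mem_nhdsWithin).and (nhdsWithin_le_nhds ?_)
    exact (continuous_mul_const _).continuousAt.eventually_lt_const (by simpa using pow_pos hε 2)
  have hbarriers : ∀ᶠ δ in 𝓝[>] (0 : ℝ),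
      (quadA n (Matrix.diagonal a) x ≤ r → innerBarrier x₀ ε x ≤ u x) ∧
        (R₀ ≤ quadA n (Matrix.diagonal a) x → outerBarrier n k a R₀ R α δ x ≤ u x) :=
    hsmall.mono fun δ hδ => barriers_le_of_approxSol hk hkn ha hSk hR₀ hα hε hδ.1 hR₀r hrR hR hδ.2
      hball hr hu hx
  rcases le_or_gt R₀ (quadA n (Matrix.diagonal a) x) with hxR₀ | hxR₀
  · have hlim : Tendsto (fun δ => outerBarrier n k a R₀ R α δ x) (𝓝[>] 0)
        (𝓝 (ubar n k a R₀ α x)) :=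
      (Continuous.tendsto' (by unfold outerBarrier; fun_prop) 0 _
        (by simp [outerBarrier])).mono_left nhdsWithin_le_nhds
    exact le_of_tendsto hlim (hbarriers.mono fun δ h => h.2 hxR₀)
  · obtain ⟨δ, hinner, -⟩ := hbarriers.exists
    calc ubar n k a R₀ α x ≤ 0 :=
          genPrim_nonpos hα (quadA_diagonal_nonneg (fun i => (ha i).le) x) hxR₀.le
      _ ≤ innerBarrier x₀ ε x := innerBarrier_nonneg_of_mem_closure_omegaRe hε hx
      _ ≤ u x := hinner (hxR₀.le.trans hR₀r)

/-- The strict supersolution `(1 - δ) · ½xᵀAx + μ + δR`, whose constant is chosen so that it equals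
`½xᵀAx + μ` on `∂E_R(0)`. -/
noncomputable def upperBarrier (a : Fin n → ℝ) (R μ δ : ℝ) (x : Euc n) : ℝ :=
  (1 - δ) * quadA n (Matrix.diagonal a) x + (μ + δ * R)

lemma contDiff_upperBarrier : ContDiff ℝ 2 (upperBarrier a R μ δ) := by
  have hq : ContDiff ℝ 2 (quadA n (Matrix.diagonal a)) := by
    simpa only [sub_zero] using contDiff_quadA_sub a 0
  exact (contDiff_const.mul hq).add contDiff_const

lemma skHess_upperBarrier (hk : 1 ≤ k) (hkn : k ≤ n) (hSk : esymmVec n k a = 1) (y : Euc n) :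
    SkHess n k (upperBarrier a R μ δ) y = (1 - δ) ^ k := by
  obtain ⟨m, rfl⟩ := Nat.exists_eq_add_of_le' hk
  have hderiv : deriv (fun s : ℝ => (1 - δ) * s + (μ + δ * R)) = fun _ => 1 - δ := by
    ext s
    exact ((hasDerivAt_id s).const_mul (1 - δ) |>.add_const _).deriv.trans (mul_one _)
  have hformula := matSk_hessMat_comp_quadA_sub hkn a 0 (y := y)
    (W := fun s => (1 - δ) * s + (μ + δ * R)) (by fun_prop)
  simp only [sub_zero, hderiv, deriv_const, zero_mul, add_zero, hSk, mul_one, ← pow_succ]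
    at hformula
  exact hformula

lemma not_isLocalMin_upperBarrier_sub (hk : 1 ≤ k) (hkn : k ≤ n) (hSk : esymmVec n k a = 1)
    (hδ : 0 < δ) (hδ₁ : δ ≤ 1) (hu : ContDiffAt ℝ 2 u y) (huk : hessMat n u y ∈ GardingCone n k)
    (hu₁ : SkHess n k u y = 1) : ¬IsLocalMin (fun x => upperBarrier a R μ δ x - u x) y := by
  intro hmin
  have hle := matSk_hessMat_le_of_isLocalMin_sub hkn contDiff_upperBarrier.contDiffAt hu huk hmin
  rw [hu₁, skHess_upperBarrier hk hkn hSk] at hle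
  exact hle.not_gt (pow_lt_one₀ (sub_nonneg.2 hδ₁) (by linarith) (by omega))

lemma le_upperBarrier_of_approxSol (hk : 1 ≤ k) (hkn : k ≤ n) (ha : ∀ i, 0 < a i)
    (hSk : esymmVec n k a = 1) (hε : 0 < ε) (hδ : 0 < δ) (hδ₁ : δ ≤ 1) (hR : 0 ≤ R) (hμ : 0 ≤ μ)
    (hRμ : genPrim n k a R₀ α R ≤ R + μ) (hu : ApproxSol n k a x₀ ε R R₀ α u)
    (hx : x ∈ closure (OmegaRe n a x₀ ε R)) : u x ≤ upperBarrier a R μ δ x := by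
  refine sub_nonneg.1 (forall_nonneg_of_forall_neg_exists_lt (ι := Unit)
    (f := fun _ x => upperBarrier a R μ δ x - u x) (fun _ => isCompact_closure_omegaRe ha)
    (fun _ => contDiff_upperBarrier.continuous.continuousOn.sub
      (continuousOn_closure_of_approxSol hu)) (fun _ y hy hneg => ⟨(), ?_⟩) () x hx)
  rcases mem_closure_omegaRe_cases hε hy with hsphere | hyR | hΩ
  · have hbarrier : 0 ≤ upperBarrier a R μ δ y :=
      add_nonneg (mul_nonneg (sub_nonneg.2 hδ₁) (quadA_diagonal_nonneg (fun i => (ha i).le) y))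
        (by positivity)
    rw [hu.2.2.2.1 y hsphere] at hneg
    linarith
  · rw [hu.2.2.2.2 y hyR, upperBarrier, ubar, hyR, ← genPrim] at hneg
    linarith
  · exact exists_lt_of_not_isLocalMin
      (mem_of_superset (isOpen_omegaRe.mem_nhds hΩ) subset_closure)
      (not_isLocalMin_upperBarrier_sub hk hkn hSk hδ hδ₁ (contDiffAt_of_smoothOnNhd hu.1 hy)
        (hessMat_mem_gardingCone_of_kConvexOn hu.2.1 hΩ) (hu.2.2.1 y hΩ))

theorem le_quadA_add_of_approxSol (hk : 1 ≤ k) (hkn : k ≤ n) (ha : ∀ i, 0 < a i)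
    (hSk : esymmVec n k a = 1) (hε : 0 < ε) (hR : 0 ≤ R) (hμ : 0 ≤ μ)
    (hRμ : genPrim n k a R₀ α R ≤ R + μ) (hu : ApproxSol n k a x₀ ε R R₀ α u)
    (hx : x ∈ closure (OmegaRe n a x₀ ε R)) : u x ≤ quadA n (Matrix.diagonal a) x + μ := by
  have hlim : Tendsto (fun δ => upperBarrier a R μ δ x) (𝓝[>] 0)
      (𝓝 (quadA n (Matrix.diagonal a) x + μ)) :=
    (Continuous.tendsto' (by unfold upperBarrier; fun_prop) 0 _
      (by simp [upperBarrier])).mono_left nhdsWithin_le_nhds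
  refine ge_of_tendsto hlim ?_
  filter_upwards [Ioc_mem_nhdsGT (zero_lt_one' ℝ)] with δ hδ
  exact le_upperBarrier_of_approxSol hk hkn ha hSk hε hδ.1 hδ.2 hR hμ hRμ hu hx

lemma posDiagonal_of_memA (hkn : k ≤ n) (hA : MemA n k (Matrix.diagonal a)) :
    (∀ i, 0 < a i) ∧ esymmVec n k a = 1 :=
  ⟨Matrix.posDef_diagonal_iff.1 hA.2.1, (matSk_diagonal hkn a).symm.trans hA.2.2⟩

lemma quadA_diagonal_le_sum_of_mem_sphere (ha : ∀ i, 0 ≤ a i) (hx₀ : x₀ ∈ Metric.ball 0 (1 / 2))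
    (hε : ε < 1 / 2) (hy : y ∈ Metric.sphere x₀ ε) :
    quadA n (Matrix.diagonal a) y ≤ ∑ i, a i := by
  have hnorm : ‖y‖ ≤ 1 := by
    have htriangle := norm_le_norm_add_norm_sub' y x₀
    linarith [mem_ball_zero_iff.1 hx₀, mem_sphere_iff_norm.1 hy]
  exact (quadA_diagonal_le_sum_mul_norm_sq ha y).trans
    (mul_le_of_le_one_right (Finset.sum_nonneg fun i _ => ha i)
      (pow_le_one₀ (norm_nonneg _) hnorm))

end Bounds

/-- Lemma 2.2: uniform `C⁰` estimate
`ū ≤ u^{ε,R} ≤ ½xᵀAx + μ(α)` in `Ω_R^ε`. -/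
theorem statement4 (n k : ℕ) (hn : 3 ≤ n) (hk1 : 1 ≤ k) (hkn : k ≤ n)
    (a : Fin n → ℝ) (hA : MemA n k (Matrix.diagonal a))
    (hk1' : k = 1 → (⨆ i, a i) < 1 / 2) :
    ∃ Λ₀ : ℝ, 0 < Λ₀ ∧ ∀ R₀ : ℝ, Λ₀ ≤ R₀ →
      ∃ α₀ : ℝ, 0 < α₀ ∧ ∀ α : ℝ, α₀ ≤ α →
        ∀ x₀ : Euc n, x₀ ∈ Metric.ball (0 : Euc n) (1 / 2) → x₀ ≠ 0 →
        ∀ ε : ℝ, 0 < ε → ε < 1 / 2 →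
        ∀ R : ℝ, 3 * R₀ < R →
        ∀ u : Euc n → ℝ, ApproxSol n k a x₀ ε R R₀ α u →
        ∀ x ∈ OmegaRe n a x₀ ε R,
          ubar n k a R₀ α x ≤ u x ∧
          u x ≤ quadA n (Matrix.diagonal a) x + muA n k a R₀ α := by
  obtain ⟨ha, hSk⟩ := posDiagonal_of_memA hkn hA
  have hh := hkfun_pos hk1 hkn ha
  have hsum : 0 ≤ ∑ i, a i := Finset.sum_nonneg fun i _ => (ha i).le
  refine ⟨1 + ∑ i, a i, by linarith, fun R₀ hR₀ => ?_⟩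
  have hR₀pos : 0 < R₀ := by linarith
  obtain ⟨V, hV⟩ := exists_bound_norm_sub_sq_of_quadA_le ha (2 * R₀) (1 / 2)
  have hlarge := tendsto_genPrim_atTop (a := a) hk1 hh.le hR₀pos (by linarith : R₀ < 2 * R₀)
  obtain ⟨α₀, hα₀⟩ := eventually_atTop.1
    ((hlarge.eventually_ge_atTop (max V (2 * R₀))).and (eventually_gt_atTop 0))
  refine ⟨α₀, (hα₀ α₀ le_rfl).2, fun α hα x₀ hx₀ _ ε hε hε₂ R hR u hu x hx => ?_⟩
  obtain ⟨⟨hV_le, hR₀_le⟩, hαpos⟩ := (hα₀ α hα).imp_left max_le_iff.1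
  have hμ_bound (s : ℝ) (hs : R₀ ≤ s) : genPrim n k a R₀ α s ≤ s + muA n k a R₀ α :=
    genPrim_le_add_muA hk1 hh (two_mul_hkfun_lt hn hk1 ha hSk hk1') hR₀pos hαpos.le hs
  have hμ : 0 ≤ muA n k a R₀ α := by linarith [hμ_bound (2 * R₀) (by linarith)]
  have hball : ∀ y ∈ Metric.sphere x₀ ε, quadA n (Matrix.diagonal a) y < R₀ := fun y hy => by
    linarith [quadA_diagonal_le_sum_of_mem_sphere (fun i => (ha i).le) hx₀ hε₂ hy]
  constructor
  · exact ubar_le_of_approxSol (r := 2 * R₀) hk1 hkn ha hSk hR₀pos hαpos.le hε (by linarith)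
      (by linarith) (by linarith) hball (fun y hy => (hV x₀ hx₀ y hy.le).trans hV_le) hu
      (subset_closure hx)
  · exact le_quadA_add_of_approxSol hk1 hkn ha hSk hε (by linarith) hμ
      (hμ_bound R (by linarith)) hu (subset_closure hx)
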